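/- arXiv:2111.04468 — 9 statements merged into one kernel-verified Lean document; each statement's English description precedes it below -/
import Mathlib

section
/- Let d ≥ 1 and let a, b ∈ ℤ[X] with deg a = d, deg b = 2d, positive leading coefficients A and B, and a(n) > 0, b(n) > 0 for all integers n ≥ 1. Let p, q be the convergents of PCF[a,b] and let L = lim_{n→∞} p_n/q_n. If the PCF does not have factorial reduction, i.e. limsup_{n→∞} (1/n)·ln( gcd(p_n,q_n) / (n!)^d ) = −∞, then for every real δ > −1 there exist infinitely many n with |L − p_n/q_n| ≥ ( q_n / gcd(p_n,q_n) )^{−(1+δ)}. In other words, a balanced-degree PCF can only provide a nontrivial effective irrationality measure if factorial reduction occurs. -/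
open Filter Polynomial

lemma poly_bounds (m : ℕ) (f : Polynomial ℤ) (hm : f.natDegree = m) (hl : 0 < f.leadingCoeff)
    (hpos : ∀ n : ℕ, 1 ≤ n → 0 < f.eval (n : ℤ)) :
    ∃ c C : ℝ, 0 < c ∧ 0 < C ∧ ∀ n : ℕ, 1 ≤ n →
      c * (n : ℝ) ^ m ≤ ((f.eval (n : ℤ) : ℤ) : ℝ) ∧ ((f.eval (n : ℤ) : ℤ) : ℝ) ≤ C * (n : ℝ) ^ m := by
  have hinj : Function.Injective (Int.castRingHom ℝ) := Int.cast_injective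
  have hf0 : f ≠ 0 := by
    rintro rfl
    simp at hl
  have hF0 : f.map (Int.castRingHom ℝ) ≠ 0 := by
    rwa [Ne, Polynomial.map_eq_zero_iff hinj]
  have hdeg : (f.map (Int.castRingHom ℝ)).degree = (X ^ m : Polynomial ℝ).degree := by
    rw [Polynomial.degree_map_eq_of_injective hinj, Polynomial.degree_X_pow,
      Polynomial.degree_eq_natDegree hf0, hm]
  have hlc : (f.map (Int.castRingHom ℝ)).leadingCoeff = (f.leadingCoeff : ℝ) := by
    rw [Polynomial.leadingCoeff_map_of_injective hinj]; simp
  have hev : ∀ n : ℕ, (f.map (Int.castRingHom ℝ)).eval (n : ℝ) = ((f.eval (n : ℤ) : ℤ) : ℝ) := by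
    intro n
    have := Polynomial.eval_intCast_map (Int.castRingHom ℝ) f (n : ℤ)
    simpa using this
  have h1 := (Polynomial.div_tendsto_atTop_leadingCoeff_div_of_degree_eq _ _ hdeg).comp
    (tendsto_natCast_atTop_atTop (R := ℝ))
  have h2 := (Polynomial.div_tendsto_atTop_leadingCoeff_div_of_degree_eq _ _ hdeg.symm).comp
    (tendsto_natCast_atTop_atTop (R := ℝ))
  obtain ⟨U, hU⟩ := h1.bddAbove_range
  obtain ⟨V, hV⟩ := h2.bddAbove_range
  refine ⟨1 / (|V| + 1), |U| + 1, by positivity, by positivity, fun n hn => ?_⟩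
  have hn' : (0 : ℝ) < (n : ℝ) ^ m := by
    have : (0 : ℝ) < n := by exact_mod_cast hn
    positivity
  have hfp : (0 : ℝ) < ((f.eval (n : ℤ) : ℤ) : ℝ) := by exact_mod_cast hpos n hn
  have hu := hU (Set.mem_range_self n)
  have hv := hV (Set.mem_range_self n)
  simp only [Function.comp, hev, eval_pow, eval_X] at hu hv
  rw [div_le_iff₀ hn'] at hu
  rw [div_le_iff₀ hfp] at hv
  constructor
  · rw [one_div, inv_mul_le_iff₀ (by positivity)]
    nlinarith [le_abs_self V]
  · nlinarith [le_abs_self U]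

lemma fr_bound (g : ℕ → ℕ) (hg : ∀ n, 0 < g n) (d : ℕ)
    (h : limsup (fun n : ℕ =>
        (((1 : ℝ) / n * Real.log ((g n : ℝ) / (Nat.factorial n : ℝ) ^ d)) : EReal))
        atTop = ⊥) (T : ℝ) (hT : 0 < T) :
    ∀ᶠ n : ℕ in atTop, (g n : ℝ) * T ^ n ≤ (Nat.factorial n : ℝ) ^ d := by
  have h1 : limsup (fun n : ℕ =>
        (((1 : ℝ) / n * Real.log ((g n : ℝ) / (Nat.factorial n : ℝ) ^ d)) : EReal))
        atTop < ((-Real.log T : ℝ) : EReal) := by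
    rw [h]; exact EReal.bot_lt_coe _
  have h2 := eventually_lt_of_limsup_lt h1
  filter_upwards [h2, eventually_ge_atTop 1] with n hn hn1
  have h3 : (1 : ℝ) / n * Real.log ((g n : ℝ) / (Nat.factorial n : ℝ) ^ d) < -Real.log T := by
    have h4 : ((((1 : ℝ) / n * Real.log ((g n : ℝ) / (Nat.factorial n : ℝ) ^ d)) : ℝ) : EReal)
        < ((-Real.log T : ℝ) : EReal) := by
      convert hn using 1
      try (rw [EReal.coe_mul, EReal.coe_div]; rfl)
    exact_mod_cast h4
  have hnp : (0 : ℝ) < n := by exact_mod_cast hn1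
  have hgp : (0 : ℝ) < g n := by exact_mod_cast hg n
  have hfp : (0 : ℝ) < (Nat.factorial n : ℝ) ^ d := by positivity
  rw [one_div, inv_mul_lt_iff₀ hnp, Real.log_div hgp.ne' hfp.ne'] at h3
  have : Real.log ((g n : ℝ) * T ^ n) ≤ Real.log ((Nat.factorial n : ℝ) ^ d) := by
    rw [Real.log_mul hgp.ne' (by positivity), Real.log_pow T n]
    linarith
  exact (Real.log_le_log_iff (by positivity) hfp).1 this

/-- Theorem 1, necessity of factorial reduction.
For a balanced-degree PCF `[a, b]` (with `deg a = d`, `deg b = 2d`, positive leading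
coefficients and positive values on positive integers), if the PCF does not have
factorial reduction, i.e. `limsup (1/n)·ln(gcd(pₙ,qₙ)/(n!)^d) = −∞`, then for every
`δ > −1` there are infinitely many `n` with
`|L − pₙ/qₙ| ≥ (qₙ/gcd(pₙ,qₙ))^(−(1+δ))`. -/
theorem stmt_0 (d : ℕ) (hd : 1 ≤ d) (a b : Polynomial ℤ)
    (hda : a.natDegree = d) (hdb : b.natDegree = 2 * d)
    (hA : 0 < a.leadingCoeff) (hB : 0 < b.leadingCoeff)
    (hapos : ∀ n : ℕ, 1 ≤ n → 0 < a.eval (n : ℤ))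
    (hbpos : ∀ n : ℕ, 1 ≤ n → 0 < b.eval (n : ℤ))
    (p q : ℕ → ℤ)
    (hp0 : p 0 = a.eval 0) (hq0 : q 0 = 1)
    (hp1 : p 1 = a.eval 1 * p 0 + b.eval 1 * 1)
    (hq1 : q 1 = a.eval 1 * q 0 + b.eval 1 * 0)
    (hprec : ∀ n : ℕ, p (n + 2) = a.eval ((n : ℤ) + 2) * p (n + 1) + b.eval ((n : ℤ) + 2) * p n)
    (hqrec : ∀ n : ℕ, q (n + 2) = a.eval ((n : ℤ) + 2) * q (n + 1) + b.eval ((n : ℤ) + 2) * q n)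
    (L : ℝ)
    (hL : Tendsto (fun n : ℕ => (p n : ℝ) / (q n : ℝ)) atTop (nhds L))
    (hnoFR : limsup (fun n : ℕ =>
        (((1 : ℝ) / n * Real.log ((Int.gcd (p n) (q n) : ℝ) / (Nat.factorial n : ℝ) ^ d)) : EReal))
        atTop = ⊥) :
    ∀ δ : ℝ, -1 < δ →
      ∃ᶠ n : ℕ in atTop,
        ((q n : ℝ) / (Int.gcd (p n) (q n) : ℝ)) ^ (-(1 + δ)) ≤ |L - (p n : ℝ) / (q n : ℝ)| := by
  intro δ hδ
  have hapos' : ∀ n : ℕ, 0 < a.eval ((n : ℤ) + 2) := fun n => by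
    have := hapos (n + 2) (by omega); push_cast at this; exact this
  have hbpos' : ∀ n : ℕ, 0 < b.eval ((n : ℤ) + 2) := fun n => by
    have := hbpos (n + 2) (by omega); push_cast at this; exact this
  have hq1' : q 1 = a.eval 1 := by rw [hq1, hq0]; ring
  have ha1 : 0 < a.eval 1 := by simpa using hapos 1 le_rfl
  have hqpos : ∀ n, 0 < q n ∧ 0 < q (n + 1) := by
    intro n
    induction n with
    | zero => exact ⟨by rw [hq0]; norm_num, by simpa [hq1'] using ha1⟩
    | succ k ih =>
      refine ⟨ih.2, ?_⟩
      rw [hqrec k]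
      have := mul_pos (hapos' k) ih.2
      have := mul_pos (hbpos' k) ih.1
      linarith
  obtain ⟨c, α, hc, hα, hab⟩ := poly_bounds d a hda hA hapos
  obtain ⟨γ, β, hγ, hβ, hbb⟩ := poly_bounds (2 * d) b hdb hB hbpos
  have hqR : ∀ n, (0 : ℝ) < q n := fun n => by exact_mod_cast (hqpos n).1
  have hqrecR : ∀ n : ℕ, (q (n + 2) : ℝ) = ((a.eval ((n + 2 : ℕ) : ℤ) : ℤ) : ℝ) * q (n + 1)
      + ((b.eval ((n + 2 : ℕ) : ℤ) : ℤ) : ℝ) * q n := fun n => by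
    rw [hqrec n]; push_cast; ring
  have hq1R : (q 1 : ℝ) = ((a.eval ((1 : ℕ) : ℤ) : ℤ) : ℝ) := by rw [hq1']; simp
  have hqlow : ∀ n : ℕ, c ^ n * (Nat.factorial n : ℝ) ^ d ≤ q n := by
    intro n
    induction n with
    | zero => simp [hq0]
    | succ k ih =>
      have hstep : ((a.eval ((k + 1 : ℕ) : ℤ) : ℤ) : ℝ) * q k ≤ q (k + 1) := by
        rcases k with _ | k
        · simp [hq0, hq1']
        · rw [hqrecR k]
          have : (0 : ℝ) < ((b.eval ((k + 2 : ℕ) : ℤ) : ℤ) : ℝ) := by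
            exact_mod_cast hbpos (k + 2) (by omega)
          have := mul_pos this (hqR k)
          linarith
      have h1 := (hab (k + 1) (by omega)).1
      calc c ^ (k + 1) * (Nat.factorial (k + 1) : ℝ) ^ d
          = (c * ((k + 1 : ℕ) : ℝ) ^ d) * (c ^ k * (Nat.factorial k : ℝ) ^ d) := by
            rw [Nat.factorial_succ]; push_cast; rw [mul_pow]; ring
        _ ≤ ((a.eval ((k + 1 : ℕ) : ℤ) : ℤ) : ℝ) * q k :=
            mul_le_mul h1 ih (by positivity) (le_trans (by positivity) h1)
        _ ≤ _ := hstep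
  obtain ⟨R, hR⟩ : ∃ R : ℝ, R = α + 2 ^ d * β + 1 := ⟨_, rfl⟩
  have hβ2 : 0 < 2 ^ d * β := by positivity
  have hR1 : 1 ≤ R := by rw [hR]; linarith
  have hR0 : 0 < R := by linarith
  have hqup : ∀ n : ℕ, (q n : ℝ) ≤ R ^ n * (Nat.factorial n : ℝ) ^ d ∧
      (q (n + 1) : ℝ) ≤ R ^ (n + 1) * (Nat.factorial (n + 1) : ℝ) ^ d := by
    intro n
    induction n with
    | zero =>
      refine ⟨by simp [hq0], ?_⟩
      have := (hab 1 le_rfl).2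
      rw [← hq1R] at this
      simp at this ⊢
      linarith
    | succ k ih =>
      refine ⟨ih.2, ?_⟩
      have h1 := (hab (k + 2) (by omega)).2
      have h2 := (hbb (k + 2) (by omega)).2
      have e1 : (q (k + 2) : ℝ) ≤ (α * ((k + 2 : ℕ) : ℝ) ^ d) *
          (R ^ (k + 1) * (Nat.factorial (k + 1) : ℝ) ^ d) +
          (β * ((k + 2 : ℕ) : ℝ) ^ (2 * d)) * (R ^ k * (Nat.factorial k : ℝ) ^ d) := by
        rw [hqrecR k]
        exact add_le_add (mul_le_mul h1 ih.2 (hqR _).le (by positivity))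
          (mul_le_mul h2 ih.1 (hqR _).le (by positivity))
      have hk2 : ((k : ℝ) + 2) ^ d ≤ 2 ^ d * ((k : ℝ) + 1) ^ d := by
        rw [← mul_pow]
        exact pow_le_pow_left₀ (by positivity) (by linarith [(Nat.cast_nonneg k : (0 : ℝ) ≤ k)]) d
      have e2 : ((k : ℝ) + 2) ^ (2 * d) * (Nat.factorial k : ℝ) ^ d ≤
          2 ^ d * (Nat.factorial (k + 2) : ℝ) ^ d := by
        have : (Nat.factorial (k + 2) : ℝ) = ((k : ℝ) + 2) * (((k : ℝ) + 1) * Nat.factorial k) := by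
          rw [Nat.factorial_succ, Nat.factorial_succ]; push_cast; ring
        rw [this, mul_pow, mul_pow]
        calc ((k : ℝ) + 2) ^ (2 * d) * (Nat.factorial k : ℝ) ^ d
            = ((k : ℝ) + 2) ^ d * (((k : ℝ) + 2) ^ d * (Nat.factorial k : ℝ) ^ d) := by ring
          _ ≤ (2 ^ d * ((k : ℝ) + 1) ^ d) * (((k : ℝ) + 2) ^ d * (Nat.factorial k : ℝ) ^ d) :=
              mul_le_mul_of_nonneg_right hk2 (by positivity)
          _ = _ := by ring
      have e3 : ((k : ℝ) + 2) ^ d * (Nat.factorial (k + 1) : ℝ) ^ d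
          = (Nat.factorial (k + 2) : ℝ) ^ d := by
        rw [← mul_pow, Nat.factorial_succ (k + 1)]; push_cast; ring
      have hF : (0 : ℝ) < (Nat.factorial (k + 2) : ℝ) ^ d := by positivity
      have hRk : 0 < R ^ k := by positivity
      push_cast at e1
      calc (q (k + 2) : ℝ) ≤ _ := e1
        _ = α * R ^ (k + 1) * (((k : ℝ) + 2) ^ d * (Nat.factorial (k + 1) : ℝ) ^ d) +
            β * R ^ k * (((k : ℝ) + 2) ^ (2 * d) * (Nat.factorial k : ℝ) ^ d) := by ring
        _ ≤ α * R ^ (k + 1) * (Nat.factorial (k + 2) : ℝ) ^ d +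
            β * R ^ k * (2 ^ d * (Nat.factorial (k + 2) : ℝ) ^ d) := by
            rw [e3]; gcongr
        _ = (α * R + 2 ^ d * β) * (R ^ k * (Nat.factorial (k + 2) : ℝ) ^ d) := by ring
        _ ≤ R ^ 2 * (R ^ k * (Nat.factorial (k + 2) : ℝ) ^ d) := by
            apply mul_le_mul_of_nonneg_right _ (by positivity)
            nlinarith
        _ = _ := by ring
  have hdet : ∀ n : ℕ, γ ^ (n + 1) * (Nat.factorial (n + 1) : ℝ) ^ (2 * d) ≤
      |(p (n + 1) : ℝ) * q n - p n * q (n + 1)| := by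
    intro n
    induction n with
    | zero =>
      have h1 := (hbb 1 le_rfl).1
      have : (p 1 : ℝ) * q 0 - p 0 * q 1 = ((b.eval ((1 : ℕ) : ℤ) : ℤ) : ℝ) := by
        rw [hp1, hq1, hq0]; push_cast; ring
      simp only [zero_add]
      rw [this]
      refine le_trans ?_ (le_abs_self _)
      simpa using h1
    | succ k ih =>
      have h1 := (hbb (k + 2) (by omega)).1
      have e : (p (k + 2) : ℝ) * q (k + 1) - p (k + 1) * q (k + 2) =
          -(((b.eval ((k + 2 : ℕ) : ℤ) : ℤ) : ℝ) * ((p (k + 1) : ℝ) * q k - p k * q (k + 1))) := by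
        rw [hprec k, hqrec k]; push_cast; ring
      have hbp : (0 : ℝ) < ((b.eval ((k + 2 : ℕ) : ℤ) : ℤ) : ℝ) := by
        exact_mod_cast hbpos (k + 2) (by omega)
      rw [show k + 1 + 1 = k + 2 from rfl, e, abs_neg, abs_mul, abs_of_pos hbp]
      calc γ ^ (k + 2) * (Nat.factorial (k + 2) : ℝ) ^ (2 * d)
          = (γ * ((k + 2 : ℕ) : ℝ) ^ (2 * d)) *
            (γ ^ (k + 1) * (Nat.factorial (k + 1) : ℝ) ^ (2 * d)) := by
            rw [Nat.factorial_succ (k + 1)]; push_cast; rw [mul_pow]; ring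
        _ ≤ _ := mul_le_mul h1 ih (by positivity) hbp.le
  obtain ⟨ρ, hρd⟩ : ∃ ρ : ℝ, ρ = γ / R ^ 2 := ⟨_, rfl⟩
  have hρ : 0 < ρ := by rw [hρd]; positivity
  have hgap : ∀ n : ℕ, ρ ^ (n + 1) ≤
      |(p (n + 1) : ℝ) / q (n + 1) - (p n : ℝ) / q n| := by
    intro n
    have hq0' := hqR n
    have hq1'' := hqR (n + 1)
    rw [div_sub_div _ _ hq1''.ne' hq0'.ne', abs_div, abs_of_pos (mul_pos hq1'' hq0'),
      le_div_iff₀ (mul_pos hq1'' hq0')]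
    have hfm : (Nat.factorial n : ℝ) ^ d ≤ (Nat.factorial (n + 1) : ℝ) ^ d := by
      gcongr; omega
    have hRm : R ^ n ≤ R ^ (n + 1) := pow_le_pow_right₀ hR1 (by omega)
    have e1 : (q (n + 1) : ℝ) * q n ≤
        (R ^ (n + 1) * (Nat.factorial (n + 1) : ℝ) ^ d) *
        (R ^ (n + 1) * (Nat.factorial (n + 1) : ℝ) ^ d) := by
      refine mul_le_mul (hqup n).2 ((hqup n).1.trans ?_) hq0'.le (by positivity)
      gcongr
    calc ρ ^ (n + 1) * ((q (n + 1) : ℝ) * q n) ≤ ρ ^ (n + 1) * _ :=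
          mul_le_mul_of_nonneg_left e1 (by positivity)
      _ = (ρ * R ^ 2) ^ (n + 1) * (Nat.factorial (n + 1) : ℝ) ^ (2 * d) := by
          rw [mul_pow]; ring
      _ = γ ^ (n + 1) * (Nat.factorial (n + 1) : ℝ) ^ (2 * d) := by
          rw [hρd, div_mul_cancel₀ _ (by positivity)]
      _ ≤ _ := hdet n
      _ = _ := by congr 1; ring
  have hgpos : ∀ n, 0 < Int.gcd (p n) (q n) := fun n =>
    Int.gcd_pos_of_ne_zero_right _ (hqpos n).1.ne'
  have hδ' : 0 < 1 + δ := by linarith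
  obtain ⟨S, hSd⟩ : ∃ S : ℝ, S = (ρ / 4) ^ (-(1 / (1 + δ))) := ⟨_, rfl⟩
  have hS : 0 < S := by rw [hSd]; positivity
  have hSρ : S ^ (-(1 + δ)) = ρ / 4 := by
    rw [hSd, ← Real.rpow_mul (by positivity)]
    rw [show -(1 / (1 + δ)) * -(1 + δ) = 1 by field_simp]
    simp
  have hfr := fr_bound (fun n => Int.gcd (p n) (q n)) hgpos d hnoFR (S / c) (by positivity)
  have hsmall : ∀ᶠ n : ℕ in atTop,
      ((q n : ℝ) / (Int.gcd (p n) (q n) : ℝ)) ^ (-(1 + δ)) ≤ (ρ / 4) ^ n := by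
    filter_upwards [hfr] with n hn
    have hgp : (0 : ℝ) < (Int.gcd (p n) (q n) : ℝ) := by exact_mod_cast hgpos n
    have e : S ^ n ≤ (q n : ℝ) / (Int.gcd (p n) (q n) : ℝ) := by
      rw [le_div_iff₀ hgp]
      calc S ^ n * (Int.gcd (p n) (q n) : ℝ)
          = c ^ n * ((Int.gcd (p n) (q n) : ℝ) * (S / c) ^ n) := by
            rw [div_pow]; field_simp
        _ ≤ c ^ n * (Nat.factorial n : ℝ) ^ d := by gcongr
        _ ≤ _ := hqlow n
    calc ((q n : ℝ) / (Int.gcd (p n) (q n) : ℝ)) ^ (-(1 + δ)) ≤ (S ^ n) ^ (-(1 + δ)) :=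
          Real.rpow_le_rpow_of_nonpos (by positivity) e (by linarith)
      _ = (S ^ (-(1 + δ))) ^ n := by
          rw [← Real.rpow_natCast, ← Real.rpow_natCast, ← Real.rpow_mul hS.le,
            ← Real.rpow_mul hS.le, mul_comm]
      _ = _ := by rw [hSρ]
  intro hcon
  have hlt : ∀ᶠ n : ℕ in atTop, |L - (p n : ℝ) / (q n : ℝ)| ≤ (ρ / 4) ^ n := by
    filter_upwards [hcon, hsmall] with n h1 h2
    exact (not_le.1 h1).le.trans h2
  have hlt' := (tendsto_add_atTop_nat 1).eventually hlt
  have hlim : Tendsto (fun n : ℕ => (1 / 4 : ℝ) ^ n * (1 + ρ / 4)) atTop (nhds 0) := by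
    simpa using (tendsto_pow_atTop_nhds_zero_of_lt_one (r := (1 / 4 : ℝ)) (by norm_num)
      (by norm_num)).mul_const (1 + ρ / 4)
  obtain ⟨n, h1, h2, h3⟩ := (hlt.and (hlt'.and (hlim.eventually (gt_mem_nhds hρ)))).exists
  have h4 := hgap n
  have h5 : |(p (n + 1) : ℝ) / q (n + 1) - (p n : ℝ) / q n| ≤
      (ρ / 4) ^ n + (ρ / 4) ^ (n + 1) := by
    have e : (p (n + 1) : ℝ) / q (n + 1) - (p n : ℝ) / q n =
        (L - (p n : ℝ) / q n) - (L - (p (n + 1) : ℝ) / q (n + 1)) := by ring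
    rw [e]
    exact (abs_sub _ _).trans (add_le_add h1 h2)
  have h6 : (ρ / 4) ^ n + (ρ / 4) ^ (n + 1) = ρ ^ n * ((1 / 4 : ℝ) ^ n * (1 + ρ / 4)) := by
    rw [div_eq_mul_one_div ρ 4, pow_succ, mul_pow]; ring
  have h7 : ρ ^ n * ((1 / 4 : ℝ) ^ n * (1 + ρ / 4)) < ρ ^ n * ρ :=
    mul_lt_mul_of_pos_left h3 (by positivity)
  rw [pow_succ] at h4
  linarith
end

section
/- Let d ≥ 1 and let a, b ∈ ℤ[X] with deg a = d, deg b = 2d, positive leading coefficients A and B, and a(n) > 0, b(n) > 0 for all integers n ≥ 1. Let α = (A + √(A² + 4B))/2 be the larger root of x² = Ax + B, let p, q be the convergents of PCF[a,b], and let L = lim_{n→∞} p_n/q_n. Suppose the limit ln λ := lim_{n→∞} (1/n)·ln( gcd(p_n,q_n) / (n!)^d ) exists with 0 < λ < α. Then lim_{n→∞} ( −ln|L − p_n/q_n| ) / ln( q_n / gcd(p_n,q_n) ) = 1 + δ, where δ = (ln α − ln B + ln λ)/(ln α − ln λ); i.e., the effective irrationality measure provided by the PCF equals (ln α − ln B +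 ln λ)/(ln α − ln λ). -/
open Filter Polynomial

lemma aux_contr (u e : ℕ → ℝ) (ρ : ℝ) (h0 : 0 ≤ ρ) (h1 : ρ < 1) (hu : ∀ n, 0 ≤ u n)
    (hrec : ∀ n, u (n + 1) ≤ ρ * u n + e n) (he : Tendsto e atTop (nhds 0)) :
    Tendsto u atTop (nhds 0) := by
  rw [Metric.tendsto_atTop]
  intro ε hε
  have h2 : ∀ᶠ n in atTop, e n < (ε / 2) * (1 - ρ) :=
    he.eventually_lt_const (by have : 0 < 1 - ρ := by linarith
                               positivity)
  obtain ⟨N, hN⟩ := eventually_atTop.1 h2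
  have h3 : ∀ k, u (N + k) ≤ ε / 2 + ρ ^ k * u N := by
    intro k
    induction k with
    | zero => simp; linarith
    | succ k ih =>
      have h4 := hrec (N + k)
      have h5 := hN (N + k) (by omega)
      have h6 := mul_le_mul_of_nonneg_left ih h0
      calc u (N + (k + 1)) ≤ ρ * u (N + k) + e (N + k) := h4
        _ ≤ ρ * (ε / 2 + ρ ^ k * u N) + (ε / 2) * (1 - ρ) := by linarith
        _ = _ := by ring
  have h4 : Tendsto (fun k => ρ ^ k * u N) atTop (nhds 0) := by
    simpa using (tendsto_pow_atTop_nhds_zero_of_lt_one h0 h1).mul_const (u N)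
  obtain ⟨K, hK⟩ := eventually_atTop.1 (h4.eventually_lt_const (half_pos hε))
  refine ⟨N + K, fun n hn => ?_⟩
  obtain ⟨k, rfl⟩ : ∃ k, n = N + k := ⟨n - N, by omega⟩
  rw [Real.dist_eq, sub_zero, abs_of_nonneg (hu _)]
  linarith [h3 k, hK k (by omega)]

lemma aux_log (u : ℕ → ℝ) (l : ℝ) (hl : 0 < l) (hu : ∀ n, 0 < u n)
    (h : Tendsto (fun n => u (n + 1) / u n) atTop (nhds l)) :
    Tendsto (fun n : ℕ => (1 : ℝ) / n * Real.log (u n)) atTop (nhds (Real.log l)) := by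
  have h1 : Tendsto (fun n => Real.log (u (n + 1) / u n)) atTop (nhds (Real.log l)) :=
    h.log hl.ne'
  have h2 := h1.cesaro
  have h3 : Tendsto (fun n : ℕ => (1 : ℝ) / n * Real.log (u 0)) atTop (nhds 0) := by
    simpa using (tendsto_one_div_atTop_nhds_zero_nat (𝕜 := ℝ)).mul_const (Real.log (u 0))
  have h4 := h2.add h3
  rw [add_zero] at h4
  refine h4.congr fun n => ?_
  have : ∑ i ∈ Finset.range n, Real.log (u (i + 1) / u i) = Real.log (u n) - Real.log (u 0) := by
    rw [← Finset.sum_range_sub (fun i => Real.log (u i))]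
    refine Finset.sum_congr rfl fun i _ => ?_
    rw [Real.log_div (hu _).ne' (hu _).ne']
  rw [this, one_div]
  ring

lemma aux_poly (a : Polynomial ℤ) (d : ℕ) (h : a.natDegree = d) (h0 : 0 < a.leadingCoeff) :
    Tendsto (fun n : ℕ => ((a.eval ((n : ℤ) + 2) : ℤ) : ℝ) / ((n : ℝ) + 2) ^ d) atTop
      (nhds (a.leadingCoeff : ℝ)) := by
  have ha : a ≠ 0 := by rintro rfl; simp at h0
  have hinj : Function.Injective (Int.castRingHom ℝ) := Int.cast_injective
  have h1 := Polynomial.div_tendsto_atTop_leadingCoeff_div_of_degree_eq (a.map (Int.castRingHom ℝ))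
    ((X : ℝ[X]) ^ d) (by
      rw [Polynomial.degree_map_eq_of_injective hinj, degree_X_pow, degree_eq_natDegree ha, h])
  have h2 : Tendsto (fun n : ℕ => (n : ℝ) + 2) atTop atTop :=
    tendsto_atTop_add_const_right _ _ tendsto_natCast_atTop_atTop
  have h3 := h1.comp h2
  rw [Polynomial.leadingCoeff_map_of_injective hinj] at h3
  simp only [eq_intCast, leadingCoeff_X_pow, div_one] at h3
  refine h3.congr fun n => ?_
  have : ((n : ℝ) + 2) = Int.castRingHom ℝ ((n : ℤ) + 2) := by simp
  simp only [Function.comp, eval_pow, eval_X]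
  congr 1
  rw [this, Polynomial.eval_map_apply]
  simp

/-- Convergence of a perturbed Moebius iteration. -/
lemma aux_moebius (s A' B' : ℕ → ℝ) (A B α : ℝ) (hA : 0 < A) (hB : 0 < B)
    (hα : 0 < α) (hαe : α ^ 2 = A * α + B)
    (hs : ∀ n, 0 < s n) (hB' : ∀ n, 0 < B' n)
    (hrec : ∀ n, s (n + 1) = A' n + B' n / s n)
    (hAt : Tendsto A' atTop (nhds A)) (hBt : Tendsto B' atTop (nhds B)) :
    Tendsto s atTop (nhds α) := by
  obtain ⟨β, hβ⟩ : ∃ β, β = α - A := ⟨_, rfl⟩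
  have hBe : B = α * β := by rw [hβ]; nlinarith
  have hβ0 : 0 < β := by
    by_contra hc
    push Not at hc
    nlinarith
  have hβα : β < α := by linarith
  -- perturbation
  set e : ℕ → ℝ := fun n => (A' n - A) + (B' n - B) / s n with he
  have hstep : ∀ n, s (n + 1) = A + B / s n + e n := by
    intro n
    rw [hrec, he]
    have := (hs n).ne'
    field_simp
    ring
  have het : Tendsto e atTop (nhds 0) := by
    have h1 : Tendsto (fun n => A' n - A) atTop (nhds 0) := by simpa using hAt.sub_const A
    have h2 : Tendsto (fun n => B' n - B) atTop (nhds 0) := by simpa using hBt.sub_const B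
    have h3 : Tendsto (fun n => |B' n - B| * (2 / A)) atTop (nhds 0) := by
      simpa using h2.abs.mul_const (2 / A)
    have h4 : Tendsto (fun n => (B' n - B) / s n) atTop (nhds 0) := by
      refine squeeze_zero_norm' ?_ h3
      have h5 : ∀ᶠ n in atTop, A / 2 < A' n := hAt.eventually_const_lt (by linarith)
      obtain ⟨N, hN⟩ := eventually_atTop.1 h5
      filter_upwards [eventually_ge_atTop (N + 1)] with n hn
      obtain ⟨k, rfl⟩ : ∃ k, n = k + 1 := ⟨n - 1, by omega⟩
      have h6 : A / 2 ≤ s (k + 1) := by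
        rw [hrec]
        have := hN k (by omega)
        have := div_pos (hB' k) (hs k)
        linarith
      rw [Real.norm_eq_abs, abs_div, abs_of_pos (hs _), div_eq_mul_inv]
      gcongr
      rw [inv_le_comm₀ (hs _) (by positivity)]
      simpa using h6
    simpa using h1.add h4
  set t : ℕ → ℝ := fun n => (s n - α) / (s n + β) with ht
  have htr : ∀ n, |t (n + 1)| ≤ (β / α) * |t n| + (α + β) / β ^ 2 * |e n| := by
    intro n
    have hsn := hs n
    have hsn1 := hs (n + 1)
    have hy : 0 < A + B / s n := by positivity
    have h1 : t (n + 1) = -(β / α) * t n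
        + (α + β) * e n / ((s (n + 1) + β) * (A + B / s n + β)) := by
      have h2 : e n = s (n + 1) - (A + B / s n) := by rw [hstep]; ring
      have h3 : A = α - β := by linarith
      have h4 : A + B / s n + β = α * (s n + β) / s n := by
        rw [h3, hBe]; field_simp; ring
      rw [h4, h2, h3, hBe, ht]
      simp only
      field_simp
      ring
    rw [h1]
    refine (abs_add_le _ _).trans ?_
    rw [abs_mul, abs_neg, abs_of_pos (show 0 < β / α by positivity)]
    gcongr
    rw [abs_div, abs_mul, abs_of_pos (show 0 < α + β by positivity),
      abs_of_pos (show 0 < (s (n + 1) + β) * (A + B / s n + β) by positivity),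
      div_mul_eq_mul_div]
    gcongr
    nlinarith
  have htt : Tendsto (fun n => |t n|) atTop (nhds 0) := by
    refine aux_contr _ (fun n => (α + β) / β ^ 2 * |e n|) (β / α) (by positivity)
      ((div_lt_one hα).2 hβα) (fun n => abs_nonneg _) htr ?_
    simpa using het.abs.const_mul ((α + β) / β ^ 2)
  have htt' : Tendsto t atTop (nhds 0) := (tendsto_zero_iff_abs_tendsto_zero _).2 htt
  have h1 : Tendsto (fun n => (α + β * t n) / (1 - t n)) atTop (nhds ((α + β * 0) / (1 - 0))) :=
    ((htt'.const_mul β).const_add α).div (htt'.const_sub 1) (by norm_num)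
  simp only [mul_zero, add_zero, sub_zero, div_one] at h1
  refine h1.congr fun n => ?_
  have hsn := hs n
  have h2 : 1 - t n = (α + β) / (s n + β) := by rw [ht]; field_simp; ring
  rw [h2, ht]
  field_simp
  ring



/-- Theorem 2, formula for δ.
For a balanced-degree PCF with factorial reduction of exponential order `λ` with
`0 < λ < α`, the effective irrationality measure equals
`δ = (ln α − ln B + ln λ)/(ln α − ln λ)`, in the sense that
`(−ln|L − pₙ/qₙ|)/ln(qₙ/gcd(pₙ,qₙ)) → 1 + δ`. -/
theorem stmt_1 (d : ℕ) (hd : 1 ≤ d) (a b : Polynomial ℤ)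
    (hda : a.natDegree = d) (hdb : b.natDegree = 2 * d)
    (hA : 0 < a.leadingCoeff) (hB : 0 < b.leadingCoeff)
    (hapos : ∀ n : ℕ, 1 ≤ n → 0 < a.eval (n : ℤ))
    (hbpos : ∀ n : ℕ, 1 ≤ n → 0 < b.eval (n : ℤ))
    (p q : ℕ → ℤ)
    (hp0 : p 0 = a.eval 0) (hq0 : q 0 = 1)
    (hp1 : p 1 = a.eval 1 * p 0 + b.eval 1 * 1)
    (hq1 : q 1 = a.eval 1 * q 0 + b.eval 1 * 0)
    (hprec : ∀ n : ℕ, p (n + 2) = a.eval ((n : ℤ) + 2) * p (n + 1) + b.eval ((n : ℤ) + 2) * p n)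
    (hqrec : ∀ n : ℕ, q (n + 2) = a.eval ((n : ℤ) + 2) * q (n + 1) + b.eval ((n : ℤ) + 2) * q n)
    (L : ℝ)
    (hL : Tendsto (fun n : ℕ => (p n : ℝ) / (q n : ℝ)) atTop (nhds L))
    (α : ℝ)
    (hα : α = ((a.leadingCoeff : ℝ) +
      Real.sqrt ((a.leadingCoeff : ℝ) ^ 2 + 4 * (b.leadingCoeff : ℝ))) / 2)
    (lam : ℝ) (hlam_pos : 0 < lam) (hlam_lt : lam < α)
    (hlam : Tendsto (fun n : ℕ =>
        (1 : ℝ) / n * Real.log ((Int.gcd (p n) (q n) : ℝ) / (Nat.factorial n : ℝ) ^ d))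
        atTop (nhds (Real.log lam))) :
    Tendsto (fun n : ℕ =>
        (-Real.log |L - (p n : ℝ) / (q n : ℝ)|) /
          Real.log ((q n : ℝ) / (Int.gcd (p n) (q n) : ℝ)))
      atTop
      (nhds (1 + (Real.log α - Real.log (b.leadingCoeff : ℝ) + Real.log lam) /
        (Real.log α - Real.log lam))) := by
  have hA' : (0 : ℝ) < (a.leadingCoeff : ℝ) := by exact_mod_cast hA
  have hB' : (0 : ℝ) < (b.leadingCoeff : ℝ) := by exact_mod_cast hB
  have hAt := aux_poly a d hda hA
  have hBt := aux_poly b (2 * d) hdb hB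
  have hap : ∀ n : ℕ, (0 : ℝ) < ((a.eval ((n : ℤ) + 2) : ℤ) : ℝ) := fun n => by
    have := hapos (n + 2) (by omega)
    push_cast at this
    exact_mod_cast this
  have hbp : ∀ n : ℕ, (0 : ℝ) < ((b.eval ((n : ℤ) + 2) : ℤ) : ℝ) := fun n => by
    have := hbpos (n + 2) (by omega)
    push_cast at this
    exact_mod_cast this
  have ha1 : (0 : ℝ) < ((a.eval (1 : ℤ) : ℤ) : ℝ) := by
    have := hapos 1 le_rfl
    push_cast at this
    exact_mod_cast this
  have hb1 : (0 : ℝ) < ((b.eval (1 : ℤ) : ℤ) : ℝ) := by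
    have := hbpos 1 le_rfl
    push_cast at this
    exact_mod_cast this
  obtain ⟨P, hP⟩ : ∃ P : ℕ → ℝ, ∀ n, P n = p n := ⟨fun n => p n, fun _ => rfl⟩
  obtain ⟨Q, hQ⟩ : ∃ Q : ℕ → ℝ, ∀ n, Q n = q n := ⟨fun n => q n, fun _ => rfl⟩
  obtain ⟨u, hu⟩ : ∃ u : ℕ → ℝ, ∀ n, u n = ((a.eval ((n : ℤ) + 2) : ℤ) : ℝ) :=
    ⟨fun n => ((a.eval ((n : ℤ) + 2) : ℤ) : ℝ), fun _ => rfl⟩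
  obtain ⟨v, hv⟩ : ∃ v : ℕ → ℝ, ∀ n, v n = ((b.eval ((n : ℤ) + 2) : ℤ) : ℝ) :=
    ⟨fun n => ((b.eval ((n : ℤ) + 2) : ℤ) : ℝ), fun _ => rfl⟩
  have hPr : ∀ n, P (n + 2) = u n * P (n + 1) + v n * P n := fun n => by
    rw [hP, hP, hP, hu, hv, hprec]; push_cast; rfl
  have hQr : ∀ n, Q (n + 2) = u n * Q (n + 1) + v n * Q n := fun n => by
    rw [hQ, hQ, hQ, hu, hv, hqrec]; push_cast; rfl
  have hQ0 : Q 0 = 1 := by rw [hQ, hq0]; simp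
  have hQ1 : Q 1 = ((a.eval (1 : ℤ) : ℤ) : ℝ) := by rw [hQ, hq1, hq0]; simp
  have hPQ0 : P 1 * Q 0 - P 0 * Q 1 = ((b.eval (1 : ℤ) : ℤ) : ℝ) := by
    rw [hQ0, hQ1, hP, hP, hp1]; push_cast; ring
  simp only [← hu] at hAt hap
  simp only [← hv] at hBt hbp
  simp only [← hP, ← hQ] at hL ⊢
  have hQp' : ∀ n, 0 < Q n ∧ 0 < Q (n + 1) := by
    intro n
    induction n with
    | zero => rw [hQ0, hQ1]; exact ⟨one_pos, ha1⟩
    | succ n ih =>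
      refine ⟨ih.2, ?_⟩
      rw [hQr]
      have := mul_pos (hap n) ih.2
      have := mul_pos (hbp n) ih.1
      linarith
  have hQp : ∀ n, 0 < Q n := fun n => (hQp' n).1
  -- facts about α
  have hαpos : 0 < α := by rw [hα]; positivity
  have hαe : α ^ 2 = (a.leadingCoeff : ℝ) * α + (b.leadingCoeff : ℝ) := by
    have h := Real.sq_sqrt (show 0 ≤ (a.leadingCoeff : ℝ) ^ 2 + 4 * (b.leadingCoeff : ℝ) by
      positivity)
    rw [hα]
    nlinarith
  -- ratios
  obtain ⟨w, hw⟩ : ∃ w : ℕ → ℝ, ∀ n, w n = v n / (((n : ℝ) + 2) ^ d * ((n : ℝ) + 1) ^ d) :=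
    ⟨_, fun _ => rfl⟩
  obtain ⟨s, hs⟩ : ∃ s : ℕ → ℝ, ∀ n, s n = Q (n + 1) / (Q n * ((n : ℝ) + 1) ^ d) :=
    ⟨_, fun _ => rfl⟩
  have hwp : ∀ n, 0 < w n := fun n => by
    rw [hw]; exact div_pos (hbp n) (by positivity)
  have hsp : ∀ n, 0 < s n := fun n => by
    rw [hs]; exact div_pos (hQp _) (mul_pos (hQp _) (by positivity))
  have hwt : Tendsto w atTop (nhds (b.leadingCoeff : ℝ)) := by
    have h1 : Tendsto (fun n : ℕ => (1 + 1 / ((n : ℝ) + 1)) ^ d) atTop (nhds ((1 + 0) ^ d)) :=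
      (tendsto_one_div_add_atTop_nhds_zero_nat.const_add 1).pow d
    have h2 := hBt.mul h1
    simp only [add_zero, one_pow, mul_one] at h2
    refine h2.congr fun n => ?_
    have h3 : (1 + 1 / ((n : ℝ) + 1)) = ((n : ℝ) + 2) / ((n : ℝ) + 1) := by
      field_simp; ring
    rw [hw, h3, div_pow, pow_mul', pow_two]
    have : (0 : ℝ) < ((n : ℝ) + 2) ^ d := by positivity
    field_simp
  have hst : Tendsto s atTop (nhds α) := by
    refine aux_moebius s _ w _ _ α hA' hB' hαpos hαe hsp hwp ?_ hAt hwt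
    intro n
    rw [hs, hs, hw, hQr]
    have h1 := hQp n
    have h2 := hQp (n + 1)
    have h3 : (0 : ℝ) < ((n : ℝ) + 2) ^ d := by positivity
    have h4 : (0 : ℝ) < ((n : ℝ) + 1) ^ d := by positivity
    have h5 : (((n + 1 : ℕ) : ℝ) + 1) = (n : ℝ) + 2 := by push_cast; ring
    rw [h5]
    field_simp
  have hqlog : Tendsto (fun n : ℕ => (1 : ℝ) / n * Real.log (Q n / (Nat.factorial n : ℝ) ^ d))
      atTop (nhds (Real.log α)) := by
    refine aux_log _ α hαpos (fun n => div_pos (hQp n) (by positivity)) (hst.congr fun n => ?_)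
    have h1 := hQp n
    have h3 : (0 : ℝ) < (Nat.factorial n : ℝ) ^ d := by positivity
    have h4 : (0 : ℝ) < ((n : ℝ) + 1) ^ d := by positivity
    rw [hs, Nat.factorial_succ]
    push_cast
    rw [mul_pow]
    field_simp
  have hden : Tendsto (fun n : ℕ => (1 : ℝ) / n *
      Real.log (Q n / (Int.gcd (p n) (q n) : ℝ))) atTop (nhds (Real.log α - Real.log lam)) := by
    refine (hqlog.sub hlam).congr fun n => ?_
    have h1 := hQp n
    have hq' : q n ≠ 0 := by
      intro h
      rw [hQ, h] at h1
      simp at h1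
    have hg : (0 : ℝ) < (Int.gcd (p n) (q n) : ℝ) := by
      exact_mod_cast Int.gcd_pos_of_ne_zero_right _ hq'
    have h3 : (0 : ℝ) < (Nat.factorial n : ℝ) ^ d := by positivity
    rw [Real.log_div h1.ne' h3.ne', Real.log_div hg.ne' h3.ne', Real.log_div h1.ne' hg.ne']
    ring
  -- differences of consecutive convergents
  obtain ⟨D, hD⟩ : ∃ D : ℕ → ℝ, ∀ n, D n = (-1) ^ n * (P (n + 1) / Q (n + 1) - P n / Q n) :=
    ⟨_, fun _ => rfl⟩
  obtain ⟨r, hr⟩ : ∃ r : ℕ → ℝ, ∀ n, r n = v n * Q n / Q (n + 2) := ⟨_, fun _ => rfl⟩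
  have hDr : ∀ n, D (n + 1) = D n * r n := by
    intro n
    have h0 := hQp n
    have h1 := hQp (n + 1)
    have h2 := hQp (n + 2)
    have e1 : P (n + 2) / Q (n + 2) - P (n + 1) / Q (n + 1)
        = -(v n * (P (n + 1) * Q n - P n * Q (n + 1))) / (Q (n + 2) * Q (n + 1)) := by
      rw [div_sub_div _ _ h2.ne' h1.ne']
      congr 1
      rw [hPr, hQr]; ring
    rw [hD, hD, hr, e1, pow_succ]
    field_simp
  have hrp : ∀ n, 0 < r n := fun n => by
    rw [hr]; exact div_pos (mul_pos (hbp n) (hQp n)) (hQp _)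
  have hr1 : ∀ n, r n < 1 := fun n => by
    rw [hr, div_lt_one (hQp _), hQr]
    have := mul_pos (hap n) (hQp (n + 1))
    linarith
  have hDp : ∀ n, 0 < D n := by
    intro n
    induction n with
    | zero =>
      rw [hD]
      have h0 := hQp 0
      have h1 := hQp 1
      have : P (0 + 1) / Q (0 + 1) - P 0 / Q 0 = ((b.eval (1 : ℤ) : ℤ) : ℝ) / (Q 1 * Q 0) := by
        rw [← hPQ0, zero_add]
        field_simp
      rw [this]
      positivity
    | succ n ih => rw [hDr]; exact mul_pos ih (hrp n)
  have hrt : Tendsto r atTop (nhds ((b.leadingCoeff : ℝ) / (α * α))) := by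
    have h1 := hwt.div (hst.mul (hst.comp (tendsto_add_atTop_nat 1)))
      (mul_pos hαpos hαpos).ne'
    refine h1.congr fun n => ?_
    simp only [Function.comp, Pi.div_apply]
    have h0 := hQp n
    have h1 := hQp (n + 1)
    have h2 := hQp (n + 2)
    have h3 : (0 : ℝ) < ((n : ℝ) + 2) ^ d := by positivity
    have h4 : (0 : ℝ) < ((n : ℝ) + 1) ^ d := by positivity
    have h5 : (((n + 1 : ℕ) : ℝ) + 1) = (n : ℝ) + 2 := by push_cast; ring
    rw [hr, hw, hs, hs, h5]
    field_simp
  have hDlog : Tendsto (fun n : ℕ => (1 : ℝ) / n * Real.log (D n)) atTop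
      (nhds (Real.log ((b.leadingCoeff : ℝ) / (α * α)))) := by
    refine aux_log D _ (by positivity) hDp (hrt.congr fun n => ?_)
    rw [hDr]
    have := hDp n
    field_simp
  -- the error
  obtain ⟨y, hy⟩ : ∃ y : ℕ → ℝ, ∀ n, y n = (-1) ^ n * (L - P n / Q n) := ⟨_, fun _ => rfl⟩
  have hyD : ∀ n, y n + y (n + 1) = D n := fun n => by
    rw [hy, hy, hD, pow_succ]; ring
  have hyabs : ∀ n, |y n| = |L - P n / Q n| := fun n => by
    rw [hy, abs_mul, abs_pow, abs_neg, abs_one, one_pow, one_mul]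
  have hyt : Tendsto y atTop (nhds 0) := by
    rw [tendsto_zero_iff_abs_tendsto_zero]
    have h1 : Tendsto (fun n => |L - P n / Q n|) atTop (nhds 0) := by
      simpa using (hL.const_sub L).abs
    exact h1.congr fun n => (hyabs n).symm
  have hDlt : ∀ n, D (n + 1) < D n := fun n => by
    rw [hDr]
    have := mul_lt_mul_of_pos_left (hr1 n) (hDp n)
    linarith
  have hy0 : ∀ n, 0 ≤ y n := by
    intro n
    have hanti : Antitone (fun k => y (n + 2 * k)) := by
      refine antitone_nat_of_succ_le fun k => ?_
      have h1 := hyD (n + 2 * k)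
      have h2 := hyD (n + 2 * k + 1)
      have h3 := hDlt (n + 2 * k)
      have h4 : n + 2 * (k + 1) = n + 2 * k + 1 + 1 := by ring
      rw [h4]
      linarith
    have ht : Tendsto (fun k => y (n + 2 * k)) atTop (nhds 0) := by
      refine hyt.comp (tendsto_atTop_mono (fun k => ?_) tendsto_id)
      simp only [id]
      omega
    simpa using hanti.le_of_tendsto ht 0
  have hyu : ∀ n, y n ≤ D n := fun n => by linarith [hyD n, hy0 (n + 1)]
  have hyl : ∀ n, D n * (1 - r n) ≤ y n := fun n => by
    have := hyD n
    have := hyD (n + 1)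
    have := hDr n
    have := hy0 (n + 1 + 1)
    linarith
  have hρ : (b.leadingCoeff : ℝ) / (α * α) < 1 := by
    rw [div_lt_one (by positivity)]
    have := mul_pos hA' hαpos
    nlinarith
  have hlow : Tendsto (fun n : ℕ => (1 : ℝ) / n * Real.log (D n) +
      (1 : ℝ) / n * Real.log (1 - r n)) atTop
      (nhds (Real.log ((b.leadingCoeff : ℝ) / (α * α)))) := by
    have h1 := (tendsto_one_div_atTop_nhds_zero_nat (𝕜 := ℝ)).mul
      ((hrt.const_sub 1).log (by linarith))
    simpa using hDlog.add h1
  have hnum : Tendsto (fun n : ℕ => (1 : ℝ) / n * Real.log |L - P n / Q n|) atTop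
      (nhds (Real.log ((b.leadingCoeff : ℝ) / (α * α)))) := by
    refine tendsto_of_tendsto_of_tendsto_of_le_of_le hlow hDlog (fun n => ?_) (fun n => ?_)
    · have h1 : 0 < 1 - r n := by linarith [hr1 n]
      simp only
      rw [← hyabs, abs_of_nonneg (hy0 n), ← mul_add, ← Real.log_mul (hDp n).ne' h1.ne']
      exact mul_le_mul_of_nonneg_left (Real.log_le_log (mul_pos (hDp n) h1) (hyl n))
        (by positivity)
    · have h1 : 0 < 1 - r n := by linarith [hr1 n]
      have h2 : 0 < y n := lt_of_lt_of_le (mul_pos (hDp n) h1) (hyl n)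
      simp only
      rw [← hyabs, abs_of_nonneg (hy0 n)]
      exact mul_le_mul_of_nonneg_left (Real.log_le_log h2 (hyu n)) (by positivity)
  have hne : Real.log α - Real.log lam ≠ 0 := by
    have := Real.log_lt_log hlam_pos hlam_lt
    linarith
  have hfin := hnum.neg.div hden hne
  have hval : 1 + (Real.log α - Real.log (b.leadingCoeff : ℝ) + Real.log lam) /
        (Real.log α - Real.log lam) = -Real.log ((b.leadingCoeff : ℝ) / (α * α)) /
        (Real.log α - Real.log lam) := by
    rw [Real.log_div hB'.ne' (by positivity), Real.log_mul hαpos.ne' hαpos.ne']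
    field_simp
    ring
  rw [hval]
  refine hfin.congr' ?_
  filter_upwards [eventually_gt_atTop 0] with n hn
  have hn' : (1 : ℝ) / n ≠ 0 := by positivity
  simp only [Pi.div_apply]
  rw [← mul_neg, mul_div_mul_left _ _ hn']
end

section
/- Let a, b ∈ ℤ[X] satisfy a(X) + a(−1−X) = 0 and b(X) = b(−X) as polynomial identities, and b(0) = 0. Let (u_n)_{n ≥ −1} be any integer sequence satisfying u_n = a(n)·u_{n−1} + b(n)·u_{n−2} for all n ≥ 1. Then for every odd prime r, r divides u_n for all n ≥ 2r − 1. -/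
open Polynomial

/-- Continuant on the block starting at `i` of given length. -/
def contF {R : Type*} [CommRing R] (A B : ℤ → R) (i : ℤ) : ℕ → R
  | 0 => 1
  | 1 => A i
  | (l + 2) => A (i + l + 1) * contF A B i (l + 1) + B (i + l + 1) * contF A B i l

theorem contF_back {R : Type*} [CommRing R] (A B : ℤ → R) (i : ℤ) (l : ℕ) :
    contF A B i (l + 2) = A i * contF A B (i + 1) (l + 1) + B (i + 1) * contF A B (i + 2) l := by
  induction l using Nat.strong_induction_on with
  | _ l ih =>
    match l with
    | 0 => simp [contF]; ring
    | 1 =>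
      simp only [contF]
      push_cast
      rw [show i + 0 + 1 = i + 1 by ring, show i + 1 + 0 + 1 = i + 2 by ring,
        show i + 1 + 1 = i + 2 by ring]
      ring
    | l + 2 =>
      have h1 := ih (l + 1) (by omega)
      have h0 := ih l (by omega)
      rw [contF, h1, h0, contF.eq_3 A B (i + 1) (l + 1), contF.eq_3 A B (i + 2) l]
      push_cast
      rw [show i + ((l : ℤ) + 2) + 1 = i + l + 3 by ring,
        show i + 1 + ((l : ℤ) + 1) + 1 = i + l + 3 by ring,
        show i + 2 + (l : ℤ) + 1 = i + l + 3 by ring]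
      ring

theorem contF_refl {R : Type*} [CommRing R] (A B : ℤ → R)
    (hA : ∀ k, A (-1 - k) = - A k) (hB : ∀ k, B (-k) = B k) (l : ℕ) : ∀ i : ℤ,
    contF A B i l = (-1) ^ l * contF A B (-i - l) l := by
  induction l using Nat.strong_induction_on with
  | _ l ih =>
    intro i
    match l with
    | 0 => simp [contF]
    | 1 =>
      simp only [contF]
      have := hA i
      push_cast
      rw [show -i - 1 = -1 - i by ring, this]; ring
    | l + 2 =>
      rw [contF_back A B (-i - _), contF, ih (l + 1) (by omega), ih l (by omega)]
      have h1 := hA (i + l + 1)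
      have h2 := hB (i + l + 1)
      push_cast
      rw [show -i - ((l : ℤ) + 2) = -1 - (i + l + 1) by ring, h1,
        show -1 - (i + (l : ℤ) + 1) + 1 = -(i + l + 1) by ring, h2,
        show -1 - (i + (l : ℤ) + 1) + 2 = -i - l by ring,
        show -i - ((l : ℤ) + 1) = -(i + l + 1) by ring]
      ring

theorem contF_shift {R : Type*} [CommRing R] (A B : ℤ → R) (r : ℤ)
    (hA : ∀ k, A (k + r) = A k) (hB : ∀ k, B (k + r) = B k) (i : ℤ) (l : ℕ) :
    contF A B (i + r) l = contF A B i l := by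
  induction l using Nat.strong_induction_on with
  | _ l ih =>
    match l with
    | 0 => simp [contF]
    | 1 => simp [contF, hA]
    | l + 2 =>
      rw [contF, contF, ih (l + 1) (by omega), ih l (by omega),
        show i + r + l + 1 = i + l + 1 + r by ring, hA, hB]

theorem eval_per (a : Polynomial ℤ) (r : ℕ) (k : ℤ) :
    ((a.eval (k + r) : ℤ) : ZMod r) = (a.eval k : ℤ) := by
  have h := a.sub_dvd_eval_sub (k + r) k
  rw [add_sub_cancel_left] at h
  have h2 := (ZMod.intCast_zmod_eq_zero_iff_dvd _ r).2 h
  push_cast at h2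
  exact sub_eq_zero.1 h2

/-- key step of Theorem 5.
If `a(X) + a(−1−X) = 0`, `b(X) = b(−X)` as polynomial identities, and `b(0) = 0`,
then for any integer sequence `u` (indexed by `ℤ`, with arbitrary values `u₋₁, u₀`)
satisfying `u_n = a(n)·u_{n−1} + b(n)·u_{n−2}` for all `n ≥ 1`, every odd prime `r`
divides `u_n` for all `n ≥ 2r − 1`. -/
theorem stmt_7 (a b : Polynomial ℤ)
    (ha : a + a.comp (-1 - Polynomial.X) = 0)
    (hb : b.comp (-Polynomial.X) = b)
    (hb0 : b.eval 0 = 0)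
    (u : ℤ → ℤ)
    (hrec : ∀ n : ℤ, 1 ≤ n → u n = a.eval n * u (n - 1) + b.eval n * u (n - 2)) :
    ∀ r : ℕ, r.Prime → Odd r → ∀ n : ℤ, 2 * (r : ℤ) - 1 ≤ n → (r : ℤ) ∣ u n := by
  intro r hr hodd
  haveI : Fact r.Prime := ⟨hr⟩
  set A : ℤ → ZMod r := fun k => (a.eval k : ℤ) with hAdef
  set B : ℤ → ZMod r := fun k => (b.eval k : ℤ) with hBdef
  have hA : ∀ k, A (-1 - k) = - A k := by
    intro k
    have h := congrArg (Polynomial.eval k) ha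
    simp [Polynomial.eval_comp] at h
    have h' : a.eval (-1 - k) = - a.eval k := by linarith
    simp [hAdef, h']
  have hB : ∀ k, B (-k) = B k := by
    intro k
    have h := congrArg (Polynomial.eval k) hb
    simp [Polynomial.eval_comp] at h
    simp [hBdef, h]
  have pA : ∀ k, A (k + r) = A k := eval_per a r
  have pB : ∀ k, B (k + r) = B k := eval_per b r
  have hr1 : (1 : ℤ) ≤ r := by exact_mod_cast hr.one_lt.le
  have hu : ∀ n : ℤ, 1 ≤ n → (u n : ZMod r) = A n * u (n - 1) + B n * u (n - 2) := by
    intro n hn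
    rw [hrec n hn]; push_cast; rfl
  have hB0 : B 0 = 0 := by simp [hBdef, hb0]
  have key : ∀ l : ℕ, (u ((r : ℤ) - 1 + l) : ZMod r) = contF A B 0 l * u ((r : ℤ) - 1) := by
    intro l
    induction l using Nat.strong_induction_on with
    | _ l ih =>
      match l with
      | 0 => simp [contF]
      | 1 =>
        have h := hu r hr1
        have e1 := pA 0
        have e2 := pB 0
        rw [zero_add] at e1 e2
        rw [e1, e2, hB0] at h
        simp [contF, h]
      | l + 2 =>
        have h := hu ((r : ℤ) - 1 + (l + 2 : ℕ)) (by push_cast; omega)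
        have h1 := ih (l + 1) (by omega)
        have h0 := ih l (by omega)
        rw [h, contF, show (r : ℤ) - 1 + (l + 2 : ℕ) - 1 = (r : ℤ) - 1 + (l + 1 : ℕ) by
            push_cast; ring,
          show (r : ℤ) - 1 + (l + 2 : ℕ) - 2 = (r : ℤ) - 1 + l by push_cast; ring, h1, h0,
          show (r : ℤ) - 1 + (l + 2 : ℕ) = (0 + l + 1) + r by push_cast; ring, pA, pB]
        ring
  have hK : contF A B 0 r = 0 := by
    have h := contF_refl A B hA hB r 0
    have h2 := contF_shift A B r pA pB (-0 - r) r
    rw [show -0 - (r : ℤ) + r = 0 by ring] at h2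
    rw [← h2, hodd.neg_one_pow] at h
    have h3 : (2 : ZMod r) * contF A B 0 r = 0 := by linear_combination h
    have h2ne : (2 : ZMod r) ≠ 0 := by
      intro hh
      have : r ∣ 2 := (ZMod.natCast_eq_zero_iff 2 r).1 (by exact_mod_cast hh)
      have := (Nat.prime_dvd_prime_iff_eq hr Nat.prime_two).1 this
      subst this
      exact absurd hodd (by decide)
    exact (mul_eq_zero.1 h3).resolve_left h2ne
  have z0 : (u (2 * (r : ℤ) - 1) : ZMod r) = 0 := by
    have h := key r
    rw [hK, zero_mul] at h
    rw [← h]; congr 2; ring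
  have z1 : (u (2 * (r : ℤ) - 1 + 1) : ZMod r) = 0 := by
    rw [hu _ (by omega), add_sub_cancel_right, z0,
      show 2 * (r : ℤ) - 1 + 1 = 0 + r + r by ring, pB, pB, hB0]
    ring
  have z : ∀ l : ℕ, (u (2 * (r : ℤ) - 1 + l) : ZMod r) = 0 ∧
      (u (2 * (r : ℤ) - 1 + l + 1) : ZMod r) = 0 := by
    intro l
    induction l with
    | zero => simpa using ⟨z0, by simpa using z1⟩
    | succ l ih =>
      have e : 2 * (r : ℤ) - 1 + (l + 1 : ℕ) = 2 * (r : ℤ) - 1 + l + 1 := by push_cast; ring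
      rw [e]
      refine ⟨ih.2, ?_⟩
      rw [hu _ (by omega), add_sub_cancel_right, ih.2,
        show 2 * (r : ℤ) - 1 + l + 1 + 1 - 2 = 2 * (r : ℤ) - 1 + l by ring, ih.1]
      ring
  intro n hn
  obtain ⟨l, hl⟩ := Int.eq_ofNat_of_zero_le (sub_nonneg.2 hn)
  have h := (z l).1
  rw [← hl, add_sub_cancel] at h
  exact (ZMod.intCast_zmod_eq_zero_iff_dvd _ r).1 h
end

section
/- Let a, b ∈ ℤ[X] satisfy a(X) + a(−1−X) = 0 and b(X) = b(−X) as polynomial identities, and b(0) = 0. Let r = 2h + 1 be an odd prime and let (u_n)_{n ≥ −1} be any integer sequence satisfying u_n = a(n)·u_{n−1} + b(n)·u_{n−2} for all n ≥ 1. Then for every integer m with −1 ≤ m ≤ h − 1, u_{h+m} ≡ u_{h−m−2} · ∏_{j=h−m}^{h} b(j) (mod r), where the product is empty (equal to 1) when m = −1. -/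
open Polynomial

/-- the induction inside Theorem 5.
Let `r = 2h + 1` be an odd prime, `a(X) + a(−1−X) = 0`, `b(X) = b(−X)`, `b(0) = 0`,
and let `u : ℤ → ℤ` (arbitrary values `u₋₁, u₀`) satisfy
`u_n = a(n)·u_{n−1} + b(n)·u_{n−2}` for all `n ≥ 1`. Then for every integer `m`
with `−1 ≤ m ≤ h − 1`,
`u_{h+m} ≡ u_{h−m−2} · ∏_{j=h−m}^{h} b(j) (mod r)`
(the product being empty, i.e. `1`, when `m = −1`). -/
theorem stmt_8 (a b : Polynomial ℤ)
    (ha : a + a.comp (-1 - Polynomial.X) = 0)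
    (hb : b.comp (-Polynomial.X) = b)
    (hb0 : b.eval 0 = 0)
    (r h : ℕ) (hr : r.Prime) (hrh : r = 2 * h + 1)
    (u : ℤ → ℤ)
    (hrec : ∀ n : ℤ, 1 ≤ n → u n = a.eval n * u (n - 1) + b.eval n * u (n - 2)) :
    ∀ m : ℤ, -1 ≤ m → m ≤ (h : ℤ) - 1 →
      u ((h : ℤ) + m) ≡
        u ((h : ℤ) - m - 2) * (∏ j ∈ Finset.Icc ((h : ℤ) - m) (h : ℤ), b.eval j)
        [ZMOD (r : ℤ)] := by
  have hr2 : r ≠ 1 := hr.one_lt.ne'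
  have hh : 1 ≤ h := by omega
  have hae : ∀ x : ℤ, a.eval x = - a.eval (-1 - x) := by
    intro x
    have := congrArg (Polynomial.eval x) ha
    simp at this
    linarith
  have hbe : ∀ x : ℤ, b.eval (-x) = b.eval x := by
    intro x
    have := congrArg (Polynomial.eval x) hb
    simpa using this
  have hper : ∀ (p : Polynomial ℤ) (x y : ℤ), (r : ℤ) ∣ x - y → (r : ℤ) ∣ p.eval x - p.eval y :=
    fun p x y hxy => hxy.trans (Polynomial.sub_dvd_eval_sub x y p)
  have hrz : (r : ℤ) = 2 * h + 1 := by exact_mod_cast hrh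
  have hP : ∀ c d : ℤ, c ≤ d → ∏ j ∈ Finset.Icc c d, b.eval j
      = b.eval c * ∏ j ∈ Finset.Icc (c + 1) d, b.eval j := by
    intro c d hcd
    have : Finset.Icc c d = insert c (Finset.Icc (c + 1) d) := by
      ext z
      simp only [Finset.mem_Icc, Finset.mem_insert]
      omega
    rw [this, Finset.prod_insert]
    simp
  have key : ∀ k : ℕ, k ≤ h → (r : ℤ) ∣ u ((h : ℤ) + (k - 1)) -
      u ((h : ℤ) - (k - 1) - 2) * ∏ j ∈ Finset.Icc ((h : ℤ) - (k - 1)) (h : ℤ), b.eval j := by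
    intro k
    induction k using Nat.strong_induction_on with
    | _ k ih =>
      intro hk
      match k, ih, hk with
      | 0, _, _ =>
        have e1 : (h : ℤ) + (((0 : ℕ) : ℤ) - 1) = h - 1 := by push_cast; ring
        have e2 : (h : ℤ) - (((0 : ℕ) : ℤ) - 1) - 2 = h - 1 := by push_cast; ring
        have e3 : Finset.Icc ((h : ℤ) - (((0 : ℕ) : ℤ) - 1)) (h : ℤ) = ∅ := by
          apply Finset.Icc_eq_empty; push_cast; omega
        rw [e1, e2, e3]; simp
      | 1, _, _ =>
        have e1 : (h : ℤ) + (((1 : ℕ) : ℤ) - 1) = h := by push_cast; ring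
        have e2 : (h : ℤ) - (((1 : ℕ) : ℤ) - 1) - 2 = h - 2 := by push_cast; ring
        have e3 : (h : ℤ) - (((1 : ℕ) : ℤ) - 1) = h := by push_cast; ring
        rw [e1, e2, e3, Finset.Icc_self, Finset.prod_singleton, hrec h (by exact_mod_cast hh)]
        have h1 := hper a h (-1 - h) ⟨1, by rw [hrz]; ring⟩
        have h2 := hae h
        obtain ⟨c, hc⟩ := h1
        have h3 : 2 * a.eval (h : ℤ) = r * c := by linarith
        have h4 : a.eval (h : ℤ) = r * (a.eval (h : ℤ) - h * c) - 0 := by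
          rw [hrz] at h3 ⊢
          linear_combination (-(h : ℤ)) * h3 + 0
        exact ⟨(a.eval (h : ℤ) - h * c) * u (h - 1), by linear_combination u (h - 1) * h4⟩
      | n + 2, ih, hk =>
        have i1 := ih (n + 1) (by omega) (by omega)
        have i0 := ih n (by omega) (by omega)
        obtain ⟨m, hm⟩ : ∃ m : ℤ, m = n + 1 := ⟨_, rfl⟩
        have hm1 : 1 ≤ m := by omega
        have hmh : m + 1 ≤ h := by omega
        have f2 : (((n + 2 : ℕ) : ℤ) - 1) = m := by push_cast; linarith
        have f1 : (((n + 1 : ℕ) : ℤ) - 1) = m - 1 := by push_cast; linarith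
        have f0 : ((n : ℤ) - 1) = m - 2 := by linarith
        rw [f2]
        rw [f1] at i1
        rw [f0] at i0
        rw [hP ((h : ℤ) - m) h (by omega)]
        rw [show (h : ℤ) - (m - 1) = h - m + 1 by ring,
          hP ((h : ℤ) - m + 1) h (by omega), show (h : ℤ) - m + 1 - 2 = h - m - 1 by ring,
          show (h : ℤ) + (m - 1) = h + m - 1 by ring] at i1
        rw [hP ((h : ℤ) - m + 1) h (by omega)]
        rw [show (h : ℤ) - (m - 2) - 2 = h - m by ring,
          show (h : ℤ) - (m - 2) = h - m + 1 + 1 by ring,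
          show (h : ℤ) + (m - 2) = h + m - 2 by ring] at i0
        have r1 := hrec (h + m) (by omega)
        have r2 := hrec (h - m) (by omega)
        have pa := hper a (-1 - (h + m)) (h - m) ⟨-1, by rw [hrz]; ring⟩
        have pb := hper b (-(h + m)) (h - m + 1) ⟨-1, by rw [hrz]; ring⟩
        rw [hbe] at pb
        have qa := hae (h + m)
        rw [r1]
        generalize ∏ j ∈ Finset.Icc ((h : ℤ) - m + 1 + 1) (h : ℤ), b.eval j = P at *
        obtain ⟨c1, hc1⟩ := i1
        obtain ⟨c0, hc0⟩ := i0
        obtain ⟨ca, hca⟩ := pa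
        obtain ⟨cb, hcb⟩ := pb
        refine ⟨a.eval (h + m : ℤ) * c1 + b.eval (h + m : ℤ) * c0
          - ca * (u (h - m - 1) * (b.eval (h - m + 1 : ℤ) * P)) + cb * (u (h - m) * P), ?_⟩
        linear_combination a.eval (h + m : ℤ) * hc1 + b.eval (h + m : ℤ) * hc0
          + (qa - hca) * (u (h - m - 1) * (b.eval (h - m + 1 : ℤ) * P)) + hcb * (u (h - m) * P)
          + r2 * (b.eval (h - m + 1 : ℤ) * P)
  intro m hm1 hm2
  have hk := key (m + 1).toNat (by omega)
  have e : (((m + 1).toNat : ℤ) - 1) = m := by omega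
  rw [e] at hk
  exact (Int.modEq_iff_dvd.mpr hk).symm
end

section
/- Let a, b ∈ ℤ[X] satisfy a(X) + a(−1−X) = 0 and b(X) = b(−X) as polynomial identities, and b(0) = 0. Let (u_n)_{n ≥ −1} be any integer sequence satisfying u_n = a(n)·u_{n−1} + b(n)·u_{n−2} for all n ≥ 1. Then for every odd prime r and every integer k ≥ 1, r^k divides u_n for all n ≥ (k+1)·r − 1. -/
open Polynomial

/-- Continuants, shifted by one so that the value at `0` is `0`. -/
def contC (A B : ℕ → ℤ) : ℕ → ℤ
  | 0 => 0
  | 1 => 1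
  | (n + 2) => A n * contC A B (n + 1) + B n * contC A B n

theorem cont_sym {R : Type*} [CommRing R] (A B C : ℕ → R) (r : ℕ) (hr : Odd r)
    (h0 : C 0 = 0) (h1 : C 1 = 1) (hC : ∀ n, C (n + 2) = A n * C (n + 1) + B n * C n)
    (hA : ∀ i j, i + j + 1 = r → A j = - A i) (hB : ∀ i j, i + j + 1 = r → B j = B (i + 1))
    (hB0 : B 0 = 0) : 2 * C (r + 1) = 0 := by
  have key : ∀ i j, i + j = r →
      C (i + 1) * C (j + 1) - B i * C i * C j = (-1) ^ i * C (r + 1) := by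
    intro i
    induction i with
    | zero => intro j hj; obtain rfl : j = r := by omega
              simp [h1, hB0]
    | succ i ih =>
      intro j hj
      have h := ih (j + 1) (by omega)
      rw [hC j, hA i j (by omega), hB i j (by omega)] at h
      rw [hC i, pow_succ]
      linear_combination -h
  have h := key r 0 rfl
  rw [h0, hr.neg_one_pow] at h
  simp only [zero_add, h1] at h
  linear_combination h

theorem step (a b : Polynomial ℤ)
    (hb0 : b.eval 0 = 0) (u : ℤ → ℤ)
    (hrec : ∀ n : ℤ, 1 ≤ n → u n = a.eval n * u (n - 1) + b.eval n * u (n - 2))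
    (r : ℕ) (k : ℕ) (N : ℤ) (hN : 1 ≤ N) (hrN : (r : ℤ) ∣ N) (hr : 1 ≤ r)
    (hc : (r : ℤ) ∣ contC (fun j => a.eval (j : ℤ)) (fun j => b.eval (j : ℤ)) (r + 1))
    (hu : ∀ n, N - 1 ≤ n → (r : ℤ) ^ k ∣ u n)
    (hbN : (r : ℤ) ^ (k + 1) ∣ b.eval N * u (N - 2)) :
    ∀ n, N + r - 1 ≤ n → (r : ℤ) ^ (k + 1) ∣ u n := by
  set C := contC (fun j => a.eval (j : ℤ)) (fun j => b.eval (j : ℤ)) with hCdef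
  have hC : ∀ n, C (n + 2) = a.eval (n : ℤ) * C (n + 1) + b.eval (n : ℤ) * C n := by
    intro n; rw [hCdef]; simp only [contC]
  have hper : ∀ (p : Polynomial ℤ) (j n : ℤ), N - 1 ≤ n →
      (r : ℤ) ^ (k + 1) ∣ (p.eval (N + j) - p.eval j) * u n := by
    intro p j n hn
    rw [pow_succ']
    refine mul_dvd_mul (dvd_trans ?_ (Polynomial.sub_dvd_eval_sub (N + j) j p)) (hu n hn)
    simpa using hrN
  have key : ∀ j : ℕ, (r : ℤ) ^ (k + 1) ∣ u (N - 1 + j) - C (j + 1) * u (N - 1) ∧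
      (r : ℤ) ^ (k + 1) ∣ u (N + j) - C (j + 2) * u (N - 1) := by
    intro j
    induction j with
    | zero =>
      refine ⟨by simp [hCdef, contC], ?_⟩
      have e := hC 0
      have e1 : C 1 = 1 := by simp [hCdef, contC]
      have e0 : C 0 = 0 := by simp [hCdef, contC]
      have h1 := hper a 0 (N - 1) le_rfl
      have h2 := hrec N hN
      simp only [Nat.cast_zero, add_zero, zero_add, e1, e0] at *
      rw [e, h2]
      refine (dvd_add h1 hbN).trans (dvd_of_eq ?_)
      ring
    | succ j ih =>
      obtain ⟨i1, i2⟩ := ih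
      have ea : N - 1 + ((j + 1 : ℕ) : ℤ) = N + j := by push_cast; ring
      refine ⟨by rw [ea]; exact i2, ?_⟩
      have h2 := hrec (N + ((j + 1 : ℕ) : ℤ)) (by omega)
      have eb : N + ((j + 1 : ℕ) : ℤ) - 1 = N + j := by push_cast; ring
      have ec : N + ((j + 1 : ℕ) : ℤ) - 2 = N - 1 + j := by push_cast; ring
      rw [eb, ec] at h2
      have h3 := hper a ((j + 1 : ℕ) : ℤ) (N + j) (by omega)
      have h4 := hper b ((j + 1 : ℕ) : ℤ) (N - 1 + j) (by omega)
      rw [h2, hC (j + 1)]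
      have h5 := dvd_add (dvd_add h3 h4)
        (dvd_add (i2.mul_left (a.eval ((j + 1 : ℕ) : ℤ))) (i1.mul_left (b.eval ((j + 1 : ℕ) : ℤ))))
      refine h5.trans (dvd_of_eq ?_)
      ring
  have hfirst : (r : ℤ) ^ (k + 1) ∣ u (N + r - 1) := by
    have h := (key r).1
    have h' : (r : ℤ) ^ (k + 1) ∣ C (r + 1) * u (N - 1) := by
      rw [pow_succ']; exact mul_dvd_mul hc (hu _ le_rfl)
    have := dvd_add h h'
    rw [sub_add_cancel] at this
    have ee : N + (r : ℤ) - 1 = N - 1 + r := by ring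
    rw [ee]; exact this
  have hsecond : (r : ℤ) ^ (k + 1) ∣ u (N + r) := by
    rw [hrec (N + r) (by omega)]
    refine dvd_add (hfirst.mul_left _) ?_
    rw [pow_succ']
    refine mul_dvd_mul ?_ (hu _ (by omega))
    have := Polynomial.sub_dvd_eval_sub (N + r) 0 b
    rw [hb0, sub_zero, sub_zero] at this
    exact dvd_trans (dvd_add hrN dvd_rfl) this
  have hall : ∀ j : ℕ, (r : ℤ) ^ (k + 1) ∣ u (N + r - 1 + j) ∧
      (r : ℤ) ^ (k + 1) ∣ u (N + r + j) := by
    intro j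
    induction j with
    | zero => simpa using ⟨hfirst, hsecond⟩
    | succ j ih =>
      have ea : N + r - 1 + ((j + 1 : ℕ) : ℤ) = N + r + j := by push_cast; ring
      refine ⟨by rw [ea]; exact ih.2, ?_⟩
      rw [hrec (N + r + ((j + 1 : ℕ) : ℤ)) (by omega)]
      have eb : N + r + ((j + 1 : ℕ) : ℤ) - 1 = N + r + j := by push_cast; ring
      have ec : N + r + ((j + 1 : ℕ) : ℤ) - 2 = N + r - 1 + j := by push_cast; ring
      rw [eb, ec]
      exact dvd_add (ih.2.mul_left _) (ih.1.mul_left _)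
  intro n hn
  have := (hall (n - (N + r - 1)).toNat).1
  rwa [Int.toNat_of_nonneg (by omega), add_sub_cancel] at this

theorem sq_dvd_of_even (b : Polynomial ℤ) (hb : b.comp (-Polynomial.X) = b)
    (hb0 : b.eval 0 = 0) (n : ℤ) : n ^ 2 ∣ b.eval n := by
  obtain ⟨c, rfl⟩ : (X : ℤ[X]) ∣ b := by
    rw [Polynomial.X_dvd_iff, Polynomial.coeff_zero_eq_eval_zero, hb0]
  have h : c.comp (-X) = - c := by
    have : (X : ℤ[X]) * (c.comp (-X) + c) = 0 := by
      have h := hb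
      rw [Polynomial.mul_comp, Polynomial.X_comp] at h
      linear_combination -h
    rcases mul_eq_zero.mp this with h | h
    · exact absurd h Polynomial.X_ne_zero
    · exact eq_neg_of_add_eq_zero_left h
  have h0 : c.eval 0 = 0 := by
    have := congrArg (Polynomial.eval 0) h
    simp [Polynomial.eval_comp] at this
    omega
  have h2 := Polynomial.sub_dvd_eval_sub n 0 c
  rw [h0, sub_zero, sub_zero] at h2
  rw [Polynomial.eval_mul, Polynomial.eval_X, pow_two]
  exact mul_dvd_mul_left _ h2

/-- prime-power version of Theorem 5's key step.
If `a(X) + a(−1−X) = 0`, `b(X) = b(−X)` as polynomial identities, and `b(0) = 0`,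
then for any integer sequence `u` (indexed by `ℤ`, arbitrary values `u₋₁, u₀`)
satisfying `u_n = a(n)·u_{n−1} + b(n)·u_{n−2}` for all `n ≥ 1`, every odd prime `r`
and every `k ≥ 1` satisfy `r^k ∣ u_n` for all `n ≥ (k+1)·r − 1`. -/
theorem stmt_9 (a b : Polynomial ℤ)
    (ha : a + a.comp (-1 - Polynomial.X) = 0)
    (hb : b.comp (-Polynomial.X) = b)
    (hb0 : b.eval 0 = 0)
    (u : ℤ → ℤ)
    (hrec : ∀ n : ℤ, 1 ≤ n → u n = a.eval n * u (n - 1) + b.eval n * u (n - 2)) :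
    ∀ r : ℕ, r.Prime → Odd r → ∀ k : ℕ, 1 ≤ k →
      ∀ n : ℤ, ((k : ℤ) + 1) * (r : ℤ) - 1 ≤ n → (r : ℤ) ^ k ∣ u n := by
  intro r hp hodd
  have hr1 : 1 ≤ r := hp.one_lt.le
  have hae : ∀ n : ℤ, a.eval (-1 - n) = - a.eval n := by
    intro n
    have := congrArg (Polynomial.eval n) ha
    simp [Polynomial.eval_comp] at this
    linarith
  have hbe : ∀ n : ℤ, b.eval (-n) = b.eval n := by
    intro n
    have := congrArg (Polynomial.eval n) hb
    simpa [Polynomial.eval_comp] using this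
  have hc : (r : ℤ) ∣ contC (fun j => a.eval (j : ℤ)) (fun j => b.eval (j : ℤ)) (r + 1) := by
    have hcong : ∀ (p : Polynomial ℤ) (x y : ℤ), (r : ℤ) ∣ y - x →
        ((p.eval x : ℤ) : ZMod r) = ((p.eval y : ℤ) : ZMod r) := by
      intro p x y h
      rw [ZMod.intCast_eq_intCast_iff_dvd_sub]
      exact dvd_trans h (Polynomial.sub_dvd_eval_sub y x p)
    have h := cont_sym (R := ZMod r) (fun j => ((a.eval (j : ℤ) : ℤ) : ZMod r))
      (fun j => ((b.eval (j : ℤ) : ℤ) : ZMod r))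
      (fun j => ((contC (fun j => a.eval (j : ℤ)) (fun j => b.eval (j : ℤ)) j : ℤ) : ZMod r))
      r hodd (by simp [contC]) (by simp [contC]) (by intro n; simp [contC])
      (by
        intro i j hij
        have h := hcong a (j : ℤ) (-1 - i) ⟨-1, by rw [← hij]; push_cast; ring⟩
        rw [hae] at h
        simpa using h)
      (by
        intro i j hij
        have h := hcong b (j : ℤ) (-((i + 1 : ℕ) : ℤ)) ⟨-1, by rw [← hij]; push_cast; ring⟩
        rw [hbe] at h
        exact h)
      (by simp [hb0])
    have h' : (r : ℤ) ∣ 2 * contC (fun j => a.eval (j : ℤ)) (fun j => b.eval (j : ℤ)) (r + 1) := by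
      rw [← ZMod.intCast_zmod_eq_zero_iff_dvd _ r]
      exact_mod_cast h
    refine IsCoprime.dvd_of_dvd_mul_left ?_ h'
    have : Nat.Coprime r 2 := Nat.coprime_two_right.mpr hodd
    exact_mod_cast Nat.isCoprime_iff_coprime.mpr this
  have main : ∀ k : ℕ, (∀ n : ℤ, ((k : ℤ) + 1) * (r : ℤ) - 1 ≤ n → (r : ℤ) ^ k ∣ u n) ∧
      (∀ n : ℤ, ((k : ℤ) + 2) * (r : ℤ) - 1 ≤ n → (r : ℤ) ^ (k + 1) ∣ u n) := by
    intro k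
    have hsq : ∀ N : ℤ, (r : ℤ) ∣ N → (r : ℤ) ^ 2 ∣ b.eval N := fun N h =>
      dvd_trans (pow_dvd_pow_of_dvd h 2) (sq_dvd_of_even b hb hb0 N)
    have hr3 : 2 ≤ r := hp.two_le
    induction k with
    | zero =>
      refine ⟨by simp, ?_⟩
      intro n hn
      refine step a b hb0 u hrec r 0 r (by omega) dvd_rfl hr1 hc (by simp) ?_ n ?_
      · refine Dvd.dvd.mul_right (dvd_trans ?_ (hsq r dvd_rfl)) _
        exact pow_dvd_pow _ (by norm_num)
      · push_cast at hn; linarith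
    | succ k ih =>
      obtain ⟨i1, i2⟩ := ih
      have hpos : (0 : ℤ) ≤ k * r := by positivity
      refine ⟨?_, ?_⟩
      · intro n hn
        apply i2
        push_cast at hn
        linarith
      · intro n hn
        refine step a b hb0 u hrec r (k + 1) ((k + 2) * r) (by nlinarith) (dvd_mul_left _ _)
          hr1 hc i2 ?_ n ?_
        · have : (r : ℤ) ^ (k + 1 + 1) = (r : ℤ) ^ 2 * (r : ℤ) ^ k := by ring
          rw [this]
          refine mul_dvd_mul (hsq _ (dvd_mul_left _ _)) (i1 _ ?_)
          have : (2 : ℤ) ≤ r := by exact_mod_cast hr3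
          linarith
        · push_cast at hn; linarith
  intro k _
  exact (main k).1
end

section
/- Fix a positive integer k and let a(n) = k·(2n + 1) and b(n) = −n². Let p, q be the convergents of PCF[a,b]. Then for every n ≥ 1, n!/lcm(1,2,…,n) divides 2^n · gcd(p_n, q_n). -/
open PowerSeries in
/-- An integral square root of `1/(1 - 4kX + 4X²)`. -/
theorem exists_sqrt_series (k : ℤ) : ∃ G : PowerSeries ℤ, constantCoeff G = 1 ∧
    (1 - C (4 * k) * X + C 4 * X ^ 2) * G ^ 2 = 1 := by
  set y : PowerSeries ℤ := X * (C k - X) with hy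
  have hs : HasSubst y := HasSubst.of_constantCoeff_zero' (by simp [hy])
  have h0 : (catalanSeries.map (Nat.castRingHom ℤ)) ^ 2 * X + 1
      = catalanSeries.map (Nat.castRingHom ℤ) := by
    have := congrArg (PowerSeries.map (Nat.castRingHom ℤ)) catalanSeries_sq_mul_X_add_one
    simpa using this
  obtain ⟨c, hc⟩ : ∃ c : PowerSeries ℤ, c ^ 2 * y + 1 = c := by
    refine ⟨(catalanSeries.map (Nat.castRingHom ℤ)).subst y, ?_⟩
    have := congrArg (substAlgHom (R := ℤ) hs) h0
    rw [map_add, map_mul, map_pow, map_one, substAlgHom_X] at this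
    simpa only [coe_substAlgHom] using this
  have hU : (1 - 2 * y * c) * invOfUnit (1 - 2 * y * c) 1 = 1 :=
    mul_invOfUnit _ _ (by simp [hy])
  refine ⟨invOfUnit (1 - 2 * y * c) 1, by simp, ?_⟩
  generalize invOfUnit (1 - 2 * y * c) 1 = G at hU
  have h1 : (1 - C (4 * k) * X + C 4 * X ^ 2) = (1 - 2 * y * c) ^ 2 := by
    have h4 : (C 4 : PowerSeries ℤ) = 4 := by simp
    have : (C (4 * k) : PowerSeries ℤ) = 4 * C k := by simp
    rw [this, h4]
    linear_combination (-4 : PowerSeries ℤ) * y * hc + 4 * hy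
  rw [h1, ← mul_pow, hU, one_pow]

open PowerSeries in
theorem coeff_rec (k e : ℚ) (H : PowerSeries ℚ)
    (h : (1 - C (4 * k) * X + C 4 * X ^ 2) * d⁄dX ℚ H = (C (2 * k) - C 4 * X) * H + C e) :
    coeff 1 H = 2 * k * coeff 0 H + e ∧ ∀ n : ℕ, ((n : ℚ) + 2) * coeff (n + 2) H =
      2 * k * (2 * n + 3) * coeff (n + 1) H - 4 * (n + 1) * coeff n H := by
  have h' : d⁄dX ℚ H - C (4 * k) * (X * d⁄dX ℚ H) + C 4 * (X * (X * d⁄dX ℚ H))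
      = C (2 * k) * H - C 4 * (X * H) + C e := by linear_combination h
  constructor
  · have := congrArg (coeff 0) h'
    simp only [map_add, map_sub, coeff_C_mul, coeff_zero_X_mul, coeff_derivative, coeff_zero_C] at this
    simpa using this
  · intro n
    have := congrArg (coeff (n + 1)) h'
    simp only [map_add, map_sub, coeff_C_mul, coeff_succ_X_mul, coeff_derivative, coeff_C] at this
    rcases n with _ | n
    · simp only [coeff_zero_X_mul] at this
      norm_num at this ⊢
      linarith
    · simp only [coeff_succ_X_mul, coeff_derivative] at this
      push_cast at this ⊢
      norm_num at this
      linarith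

theorem seq_eq (k c : ℚ) (u h : ℕ → ℚ)
    (hu : ∀ n : ℕ, u (n + 2) = k * (2 * n + 5) * u (n + 1) - ((n : ℚ) + 2) ^ 2 * u n)
    (hh : ∀ n : ℕ, ((n : ℚ) + 2) * h (n + 2) =
      2 * k * (2 * n + 3) * h (n + 1) - 4 * (n + 1) * h n)
    (h0 : c * u 0 = h 1) (h1 : c * 2 * u 1 = 2 * h 2) (n : ℕ) :
    c * 2 ^ n * u n = (n + 1).factorial * h (n + 1) := by
  induction n using Nat.twoStepInduction with
  | zero => simpa using h0
  | one => simpa [Nat.factorial] using h1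
  | more n i1 i2 =>
    rw [hu]
    have := hh (n + 1)
    simp only [Nat.factorial_succ (n + 1 + 1), Nat.factorial_succ (n + 1)] at *
    push_cast at *
    linear_combination 2 * k * (2 * n + 5) * i2 - 4 * ((n : ℚ) + 2) ^ 2 * i1
      - (n + 2) * ((n + 1).factorial : ℚ) * this

open PowerSeries in
theorem key_series (k : ℤ) : ∃ (A : ℕ → ℤ) (h : ℕ → ℚ), A 0 = 1 ∧ A 1 = 2 * k ∧
    (∀ n : ℕ, ((n : ℚ) + 2) * A (n + 2) =
      2 * k * (2 * n + 3) * A (n + 1) - 4 * (n + 1) * A n) ∧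
    h 0 = 0 ∧ h 1 = 1 ∧
    (∀ n : ℕ, ((n : ℚ) + 2) * h (n + 2) =
      2 * k * (2 * n + 3) * h (n + 1) - 4 * (n + 1) * h n) ∧
    ∀ n : ℕ, h n = ∑ x ∈ Finset.HasAntidiagonal.antidiagonal n, (A x.1 : ℚ) * (A (x.2 - 1) / x.2) := by
  obtain ⟨G0, hG0, hG⟩ := exists_sqrt_series k
  set G : PowerSeries ℚ := G0.map (Int.castRingHom ℚ) with hGdef
  have hc : ∀ n, coeff n G = (coeff n G0 : ℤ) := by intro n; simp [hGdef]
  have hD : (1 - C (4 * (k : ℚ)) * X + C 4 * X ^ 2) * G ^ 2 = 1 := by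
    have := congrArg (PowerSeries.map (Int.castRingHom ℚ)) hG
    simp only [map_mul (PowerSeries.map (Int.castRingHom ℚ)), map_add, map_sub,
      map_pow, map_one, PowerSeries.map_C, PowerSeries.map_X, map_mul] at this
    have e4 : (Int.castRingHom ℚ) 4 = 4 := by norm_num
    have ek : (Int.castRingHom ℚ) k = (k : ℚ) := rfl
    rw [e4, ek] at this
    rw [map_mul]
    exact this
  have hGne : G ≠ 0 := by
    rintro h0
    rw [h0] at hD
    simp at hD
  have hode : (1 - C (4 * (k : ℚ)) * X + C 4 * X ^ 2) * d⁄dX ℚ G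
      = (C (2 * (k : ℚ)) - C 4 * X) * G := by
    have hd := congrArg (d⁄dX ℚ) hD
    simp only [Derivation.leibniz, map_add, map_sub, derivative_C, derivative_X, derivative_pow,
      smul_eq_mul, Derivation.map_one_eq_zero] at hd
    have h2 : (2 * G) ≠ 0 := by
      refine mul_ne_zero ?_ hGne
      intro h
      have := congrArg (coeff 0) h
      have e : (2 : PowerSeries ℚ) = C 2 := (map_ofNat C 2).symm
      rw [e, coeff_zero_C] at this
      norm_num at this
    apply mul_left_cancel₀ h2
    have e1 : (C (4 * (k : ℚ))) = (2 : PowerSeries ℚ) * C (2 * (k : ℚ)) := by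
      have : (2 : PowerSeries ℚ) = C 2 := (map_ofNat C 2).symm
      rw [this, ← map_mul]; congr 1; ring
    rw [e1] at hd ⊢
    push_cast at hd
    linear_combination hd
  set J : PowerSeries ℚ := PowerSeries.mk fun j => ((coeff (j - 1) G0 : ℤ) : ℚ) / j with hJ
  have hJd : d⁄dX ℚ J = G := by
    ext n
    rw [coeff_derivative, hc, hJ, coeff_mk]
    have : (n : ℚ) + 1 ≠ 0 := by positivity
    push_cast
    field_simp
    try simp
  have hode2 : (1 - C (4 * (k : ℚ)) * X + C 4 * X ^ 2) * d⁄dX ℚ (G * J)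
      = (C (2 * (k : ℚ)) - C 4 * X) * (G * J) + C 1 := by
    rw [Derivation.leibniz, hJd, map_one]
    simp only [smul_eq_mul]
    linear_combination J * hode + hD
  have r1 := coeff_rec k 0 G (by rw [hode]; simp)
  have r2 := coeff_rec k 1 (G * J) hode2
  have hA0 : coeff 0 G0 = 1 := by simpa using hG0
  have hH0 : coeff 0 (G * J) = 0 := by
    simp [coeff_mul, hJ]
  refine ⟨fun n => coeff n G0, fun n => coeff n (G * J), hA0, ?_, ?_, hH0, ?_, r2.2, ?_⟩
  · have := r1.1
    rw [hc, hc, hA0] at this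
    have h3 : ((coeff 1 G0 : ℤ) : ℚ) = ((2 * k : ℤ) : ℚ) := by rw [this]; push_cast; ring
    exact_mod_cast h3
  · intro n
    have := r1.2 n
    simpa only [hc] using this
  · have := r2.1
    rw [hH0] at this
    simpa using this
  · intro n
    simp only [coeff_mul, hc, hJ, coeff_mk]

theorem denom_bound (A : ℕ → ℤ) (n : ℕ) : ∃ z : ℤ,
    ((n : ℚ) + 1) * ((Finset.Icc 1 n).lcm id : ℕ) *
      ∑ x ∈ Finset.HasAntidiagonal.antidiagonal (n + 1), (A x.1 : ℚ) * (A (x.2 - 1) / x.2) = z := by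
  have : ∀ x ∈ Finset.HasAntidiagonal.antidiagonal (n + 1), ∃ z : ℤ,
      ((n : ℚ) + 1) * ((Finset.Icc 1 n).lcm id : ℕ) * ((A x.1 : ℚ) * (A (x.2 - 1) / x.2)) = z := by
    rintro ⟨i, j⟩ hx
    rw [Finset.HasAntidiagonal.mem_antidiagonal] at hx
    rcases Nat.eq_zero_or_pos j with rfl | hj
    · exact ⟨0, by simp⟩
    have hd : j ∣ (n + 1) * (Finset.Icc 1 n).lcm id := by
      rcases Nat.lt_or_ge n j with h | h
      · have : j = n + 1 := by simp at hx; omega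
        rw [this]; exact dvd_mul_right _ _
      · exact Dvd.dvd.mul_left (Finset.dvd_lcm (f := id) (Finset.mem_Icc.2 ⟨hj, h⟩)) _
    obtain ⟨m, hm⟩ := hd
    refine ⟨m * (A i * A (j - 1)), ?_⟩
    have hm' : ((n : ℚ) + 1) * ((Finset.Icc 1 n).lcm id : ℕ) = j * m := by exact_mod_cast hm
    have : (j : ℚ) ≠ 0 := by positivity
    simp only [hm']
    push_cast
    field_simp
  choose! f hf using this
  refine ⟨∑ x ∈ Finset.HasAntidiagonal.antidiagonal (n + 1), f x, ?_⟩
  rw [Finset.mul_sum, Finset.sum_congr rfl hf]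
  push_cast
  rfl

/-- Appendix D application: GCD bound for `a(n) = k(2n+1)`,
`b(n) = −n²`. For the convergents `p, q` of this PCF and every `n ≥ 1`,
`n!/lcm(1,…,n)` divides `2^n · gcd(pₙ, qₙ)`. -/
theorem stmt_10 (k : ℕ) (hk : 1 ≤ k)
    (a b : ℕ → ℤ)
    (ha : ∀ n : ℕ, a n = (k : ℤ) * (2 * n + 1))
    (hb : ∀ n : ℕ, b n = -(n : ℤ) ^ 2)
    (p q : ℕ → ℤ)
    (hp0 : p 0 = a 0) (hq0 : q 0 = 1)
    (hp1 : p 1 = a 1 * p 0 + b 1 * 1) (hq1 : q 1 = a 1 * q 0 + b 1 * 0)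
    (hprec : ∀ n : ℕ, p (n + 2) = a (n + 2) * p (n + 1) + b (n + 2) * p n)
    (hqrec : ∀ n : ℕ, q (n + 2) = a (n + 2) * q (n + 1) + b (n + 2) * q n) :
    ∀ n : ℕ, 1 ≤ n →
      (Nat.factorial n / (Finset.Icc 1 n).lcm id) ∣ 2 ^ n * Int.gcd (p n) (q n) := by
  intro n hn
  obtain ⟨A, h, hA0, hA1, hA, hh0, hh1, hh, hsum⟩ := key_series (k : ℤ)
  push_cast at hA hh hA1
  have hP : (2 : ℚ) * 2 ^ n * p n = (n + 1).factorial * A (n + 1) := by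
    refine seq_eq k 2 (fun n => (p n : ℚ)) (fun n => (A n : ℚ)) ?_ hA ?_ ?_ n
    · intro n
      simp only [hprec, ha, hb]
      push_cast
      ring
    · simp only [hp0, ha, hA1]; push_cast; ring
    · have := hA 0
      simp only [hp1, hp0, ha, hb]
      norm_num [hA0, hA1] at this ⊢
      linarith
  have hQ : (1 : ℚ) * 2 ^ n * q n = (n + 1).factorial * h (n + 1) := by
    refine seq_eq k 1 (fun n => (q n : ℚ)) h ?_ hh ?_ ?_ n
    · intro n
      simp only [hqrec, ha, hb]
      push_cast
      ring
    · simp [hq0, hh1]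
    · have := hh 0
      simp only [hq1, hq0, ha, hb]
      norm_num [hh0, hh1] at this ⊢
      linarith
  set L := (Finset.Icc 1 n).lcm id with hL
  have hLd : L ∣ n.factorial := Finset.lcm_dvd fun i hi => by
    rw [Finset.mem_Icc] at hi
    exact Nat.dvd_factorial hi.1 hi.2
  obtain ⟨M, hM⟩ := hLd
  have hLpos : 0 < L := Nat.pos_of_ne_zero fun h0 => by
    rw [h0, zero_mul] at hM
    exact n.factorial_ne_zero hM
  rw [hM, Nat.mul_div_cancel_left _ hLpos]
  have hfac : ((n + 1).factorial : ℚ) = (n + 1) * (L * M) := by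
    rw [Nat.factorial_succ, hM]; push_cast; ring
  have hq : (M : ℤ) ∣ 2 ^ n * q n := by
    obtain ⟨z, hz⟩ := denom_bound A n
    rw [← hsum, ← hL] at hz
    refine ⟨z, ?_⟩
    have : ((2 : ℚ) ^ n * q n) = M * z := by
      rw [← hz, ← one_mul ((2 : ℚ) ^ n), hQ, hfac]; ring
    exact_mod_cast this
  have hp : (M : ℤ) ∣ 2 ^ n * p n := by
    have h2 : 2 ∣ (n + 1) * L := by
      rcases Nat.lt_or_ge n 2 with h' | h'
      · have : n = 1 := by omega
        subst this
        exact Dvd.dvd.mul_right (by norm_num) _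
      · exact Dvd.dvd.mul_left (Finset.dvd_lcm (f := id) (Finset.mem_Icc.2 ⟨by norm_num, h'⟩)) _
    obtain ⟨m, hm⟩ := h2
    have hm' : ((n : ℚ) + 1) * L = 2 * m := by exact_mod_cast hm
    refine ⟨m * A (n + 1), ?_⟩
    have : ((2 : ℚ) ^ n * p n) = M * (m * A (n + 1)) := by
      rw [hfac] at hP
      linear_combination hP / 2 + M * A (n + 1) / 2 * hm'
    exact_mod_cast this
  have := Int.dvd_coe_gcd hp hq
  rw [Int.gcd_mul_left] at this
  have h3 : (2 ^ n : ℤ).natAbs = 2 ^ n := by simp [Int.natAbs_pow]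
  rw [h3] at this
  exact_mod_cast this
end

section
/- Let b ∈ ℤ[X] be a polynomial of degree d ≥ 1 with leading coefficient B, and suppose b(i) ≠ 0 for all integers i ≥ 1. Then lim_{n→∞} (1/n) · ln( |∏_{i=1}^{n} b(i)| / ( |B|^n · (n!)^d ) ) = 0; i.e., ∏_{i=1}^{n} b(i) ≐ B^n · (n!)^d up to sub-exponential factors. -/
open Filter Polynomial

/-- Step 2 of Appendix B: `∏_{i=1}^{n} b(i) ≐ B^n · (n!)^d`.
For a polynomial `b ∈ ℤ[X]` of degree `d ≥ 1` with leading coefficient `B` and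
`b(i) ≠ 0` for all integers `i ≥ 1`,
`lim (1/n)·ln( |∏_{i=1}^{n} b(i)| / (|B|^n · (n!)^d) ) = 0`. -/
theorem stmt_13 (b : Polynomial ℤ) (d : ℕ) (hd : 1 ≤ d) (hdb : b.natDegree = d)
    (hbne : ∀ i : ℕ, 1 ≤ i → b.eval (i : ℤ) ≠ 0) :
    Tendsto (fun n : ℕ =>
        (1 : ℝ) / n * Real.log
          (((|∏ i ∈ Finset.Icc 1 n, b.eval (i : ℤ)| : ℤ) : ℝ) /
            (|(b.leadingCoeff : ℝ)| ^ n * (Nat.factorial n : ℝ) ^ d)))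
      atTop (nhds 0) := by
  have hB : b.leadingCoeff ≠ 0 := by
    intro h
    rw [Polynomial.leadingCoeff_eq_zero] at h
    subst h
    simp at hdb
    omega
  have hBR : (b.leadingCoeff : ℝ) ≠ 0 := by exact_mod_cast hB
  set P : Polynomial ℝ := b.map (Int.castRingHom ℝ) with hP
  have hinj : Function.Injective (Int.castRingHom ℝ) := Int.cast_injective
  have hPl : P.leadingCoeff = (b.leadingCoeff : ℝ) := by
    rw [hP, Polynomial.leadingCoeff_map_of_injective hinj]; rfl
  have hPd : P.natDegree = d := by
    rw [hP, Polynomial.natDegree_map_eq_of_injective hinj, hdb]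
  have hev : ∀ i : ℕ, P.eval (i : ℝ) = ((b.eval (i : ℤ) : ℤ) : ℝ) := by
    intro i
    have := Polynomial.eval_intCast_map (Int.castRingHom ℝ) b (i : ℤ)
    simpa [hP] using this
  have h1 := P.isEquivalent_atTop_lead
  rw [hPl, hPd] at h1
  have h2 : Tendsto (fun x : ℝ => P.eval x / ((b.leadingCoeff : ℝ) * x ^ d)) atTop (nhds 1) := by
    refine (Asymptotics.isEquivalent_iff_tendsto_one ?_).1 h1
    filter_upwards [eventually_gt_atTop 0] with x hx
    positivity
  have h3 : Tendsto (fun i : ℕ => Real.log (P.eval ((i + 1 : ℕ) : ℝ) /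
      ((b.leadingCoeff : ℝ) * ((i + 1 : ℕ) : ℝ) ^ d))) atTop (nhds 0) := by
    have h4 := (h2.comp (tendsto_natCast_atTop_atTop (R := ℝ))).comp (tendsto_add_atTop_nat 1)
    have h5 := h4.log one_ne_zero
    simpa using h5
  refine h3.cesaro.congr ?_
  intro n
  rw [one_div]
  congr 1
  have hne : ∀ i : ℕ, P.eval ((i + 1 : ℕ) : ℝ) ≠ 0 := by
    intro i
    rw [hev]
    exact_mod_cast hbne (i + 1) (by omega)
  rw [← Real.log_prod (fun i _ => div_ne_zero (hne i)
    (mul_ne_zero hBR (pow_ne_zero _ (by positivity)))), ← Real.log_abs]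
  congr 1
  rw [Finset.prod_div_distrib, Finset.prod_mul_distrib, Finset.prod_const, Finset.card_range,
    Finset.prod_pow, abs_div, abs_mul, abs_pow, abs_pow, ← Nat.cast_prod,
    Finset.prod_range_add_one_eq_factorial, Nat.abs_cast]
  congr 1
  rw [Finset.prod_congr rfl (fun i _ => hev (i + 1)), ← Int.cast_prod, ← Int.cast_abs,
    Finset.range_eq_Ico, Finset.prod_Ico_add' (fun i : ℕ => b.eval (i : ℤ)) 0 n 1]
  rfl
end

section
/- Let a, b ∈ ℤ[X] with deg b < 2·deg a = 2·d_a, positive leading coefficient A of a, and a(n) > 0, b(n) > 0 for all integers n ≥ 1. Let q be the denominator sequence of PCF[a,b] (q_{−1}=0, q_0=1, q_n = a(n)q_{n−1} + b(n)q_{n−2}). Then lim_{n→∞} (1/n)·ln( q_n / (A^n · (n!)^{d_a}) ) = 0; i.e., q_n ≐ A^n · (n!)^{d_a}. -/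
open Filter Polynomial

/-- Appendix B, third case: `deg b < 2·deg a`.
For such a PCF with positive leading coefficient `A` of `a` and positive values on
positive integers, the denominators satisfy
`lim (1/n)·ln( qₙ / (Aⁿ·(n!)^{d_a}) ) = 0`, i.e. `qₙ ≐ Aⁿ·(n!)^{d_a}`. -/
theorem stmt_15 (a b : Polynomial ℤ)
    (hdeg : b.natDegree < 2 * a.natDegree)
    (hA : 0 < a.leadingCoeff)
    (hapos : ∀ n : ℕ, 1 ≤ n → 0 < a.eval (n : ℤ))
    (hbpos : ∀ n : ℕ, 1 ≤ n → 0 < b.eval (n : ℤ))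
    (q : ℕ → ℤ)
    (hq0 : q 0 = 1)
    (hq1 : q 1 = a.eval 1 * q 0 + b.eval 1 * 0)
    (hqrec : ∀ n : ℕ, q (n + 2) = a.eval ((n : ℤ) + 2) * q (n + 1) + b.eval ((n : ℤ) + 2) * q n) :
    Tendsto (fun n : ℕ =>
        (1 : ℝ) / n * Real.log ((q n : ℝ) /
          ((a.leadingCoeff : ℝ) ^ n * (Nat.factorial n : ℝ) ^ a.natDegree)))
      atTop (nhds 0) := by
  have hd : 0 < a.natDegree := by omega
  have hpos : ∀ n, 0 < q n ∧ 0 < q (n + 1) := by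
    intro n
    induction n with
    | zero =>
      have := hapos 1 le_rfl
      simp only [Nat.cast_one] at this
      refine ⟨by simp [hq0], ?_⟩
      simp only [zero_add, hq1, hq0]
      linarith
    | succ k ih =>
      refine ⟨ih.2, ?_⟩
      have h1 := hapos (k + 2) (by omega)
      have h2 := hbpos (k + 2) (by omega)
      push_cast at h1 h2
      rw [show k + 1 + 1 = k + 2 from rfl, hqrec]
      have := mul_pos h1 ih.2
      have := mul_pos h2 ih.1
      linarith
  have hge : ∀ n : ℕ, a.eval ((n : ℤ) + 1) * q n ≤ q (n + 1) := by
    intro n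
    rcases n with _ | k
    · simp [hq1]
    · rw [show k + 1 + 1 = k + 2 from rfl, hqrec]
      have h2 := hbpos (k + 2) (by omega)
      push_cast at h2 ⊢
      have := mul_pos h2 (hpos k).1
      rw [show (k : ℤ) + 1 + 1 = k + 2 by ring]
      linarith
  set A : ℝ := (a.leadingCoeff : ℝ) with hAdef
  have hA' : 0 < A := by
    rw [hAdef]
    exact_mod_cast hA
  set d := a.natDegree with hddef
  let aR : ℝ[X] := a.map (Int.castRingHom ℝ)
  let bR : ℝ[X] := b.map (Int.castRingHom ℝ)
  have hinj : Function.Injective (Int.castRingHom ℝ) := Int.cast_injective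
  have haR : ∀ m : ℤ, aR.eval (m : ℝ) = ((a.eval m : ℤ) : ℝ) := by
    intro m
    exact Polynomial.eval_intCast_map (Int.castRingHom ℝ) a m
  have hbR : ∀ m : ℤ, bR.eval (m : ℝ) = ((b.eval m : ℤ) : ℝ) := by
    intro m
    exact Polynomial.eval_intCast_map (Int.castRingHom ℝ) b m
  have hadeg : aR.natDegree = d := Polynomial.natDegree_map_eq_of_injective hinj a
  have hbdeg : bR.natDegree = b.natDegree := Polynomial.natDegree_map_eq_of_injective hinj b
  have halead : aR.leadingCoeff = A := by
    simpa using Polynomial.leadingCoeff_map_of_injective hinj a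
  have haR0 : aR ≠ 0 := by
    intro h
    rw [h] at hadeg
    simp at hadeg
    omega
  have hcast : Tendsto (fun n : ℕ => (n : ℝ) + 1) atTop atTop :=
    tendsto_atTop_add_const_right _ _ tendsto_natCast_atTop_atTop
  -- first term
  have hT1 : Tendsto (fun n : ℕ => aR.eval ((n : ℝ) + 1) / (A * ((n : ℝ) + 1) ^ d)) atTop (nhds 1) := by
    have h := Polynomial.div_tendsto_atTop_leadingCoeff_div_of_degree_eq aR (C A * X ^ d) (by
      rw [Polynomial.degree_C_mul_X_pow _ hA'.ne', Polynomial.degree_eq_natDegree haR0, hadeg])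
    have h2 := h.comp hcast
    rw [halead, Polynomial.leadingCoeff_C_mul_X_pow, div_self hA'.ne'] at h2
    refine h2.congr ?_
    intro n
    simp
  have hT2 : Tendsto (fun n : ℕ => bR.eval ((n : ℝ) + 1) / (A * ((n : ℝ) + 1) ^ d * aR.eval (n : ℝ)))
      atTop (nhds 0) := by
    have hX : (X + C (1:ℝ)) ≠ 0 := Polynomial.X_add_C_ne_zero 1
    have hD0 : C A * (X + C (1:ℝ)) ^ d * aR ≠ 0 :=
      mul_ne_zero (mul_ne_zero (by simpa using hA'.ne') (pow_ne_zero _ hX)) haR0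
    have hDdeg : (C A * (X + C (1:ℝ)) ^ d * aR).natDegree = d + d := by
      rw [Polynomial.natDegree_mul (mul_ne_zero (by simpa using hA'.ne') (pow_ne_zero _ hX)) haR0,
        Polynomial.natDegree_C_mul hA'.ne', Polynomial.natDegree_pow, Polynomial.natDegree_X_add_C,
        hadeg, mul_one]
    have h := Polynomial.div_tendsto_atTop_zero_of_degree_lt (bR.comp (X + C (1:ℝ)))
      (C A * (X + C (1:ℝ)) ^ d * aR) (by
        apply Polynomial.degree_lt_degree
        rw [hDdeg, Polynomial.natDegree_comp, Polynomial.natDegree_X_add_C, hbdeg]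
        omega)
    refine (h.comp tendsto_natCast_atTop_atTop).congr ?_
    intro n
    simp
  let u : ℕ → ℝ := fun n => (q n : ℝ) / (A ^ n * (Nat.factorial n : ℝ) ^ d)
  have hupos : ∀ n, 0 < u n := by
    intro n
    have : (0:ℝ) < q n := by exact_mod_cast (hpos n).1
    have : (0:ℝ) < Nat.factorial n := by exact_mod_cast Nat.factorial_pos n
    positivity
  have hratio : ∀ n : ℕ, u (n + 1) / u n = (q (n + 1) : ℝ) / q n / (A * ((n : ℝ) + 1) ^ d) := by
    intro n
    have h1 : (q n : ℝ) ≠ 0 := by exact_mod_cast (hpos n).1.ne'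
    have h2 : (Nat.factorial n : ℝ) ≠ 0 := by exact_mod_cast (Nat.factorial_pos n).ne'
    have h3 : (n : ℝ) + 1 ≠ 0 := by positivity
    have h4 := hA'.ne'
    simp only [u, Nat.factorial_succ, pow_succ]
    push_cast
    rw [mul_pow]
    field_simp
  have hlow : ∀ n : ℕ, aR.eval ((n : ℝ) + 1) / (A * ((n : ℝ) + 1) ^ d) ≤ u (n + 1) / u n := by
    intro n
    rw [hratio]
    have h1 : (0:ℝ) < q n := by exact_mod_cast (hpos n).1
    have h2 := haR ((n : ℤ) + 1)
    push_cast at h2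
    rw [h2]
    gcongr
    rw [le_div_iff₀ h1]
    exact_mod_cast hge n
  have hup : ∀ n : ℕ, 1 ≤ n → u (n + 1) / u n ≤ aR.eval ((n : ℝ) + 1) / (A * ((n : ℝ) + 1) ^ d)
      + bR.eval ((n : ℝ) + 1) / (A * ((n : ℝ) + 1) ^ d * aR.eval (n : ℝ)) := by
    intro n hn
    obtain ⟨k, rfl⟩ : ∃ k, n = k + 1 := ⟨n - 1, by omega⟩
    rw [hratio]
    have h1 : (0:ℝ) < q (k + 1) := by exact_mod_cast (hpos k).2
    have e1 := haR ((k : ℤ) + 2)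
    have e2 := hbR ((k : ℤ) + 2)
    have e3 := haR ((k : ℤ) + 1)
    have p3 := hapos (k + 1) (by omega)
    have p2 := hbpos (k + 2) (by omega)
    have g := hge k
    have r := hqrec k
    push_cast at e1 e2 e3 p3 p2 ⊢
    rw [show (k : ℝ) + 1 + 1 = k + 2 by ring, e1, e2, e3]
    have p3' : (0:ℝ) < ((a.eval ((k : ℤ) + 1) : ℤ) : ℝ) := by exact_mod_cast p3
    have p2' : (0:ℝ) < ((b.eval ((k : ℤ) + 2) : ℤ) : ℝ) := by exact_mod_cast p2
    have g' : ((a.eval ((k : ℤ) + 1) : ℤ) : ℝ) * q k ≤ q (k + 1) := by exact_mod_cast g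
    have r' : (q (k + 1 + 1) : ℝ) = ((a.eval ((k : ℤ) + 2) : ℤ) : ℝ) * q (k + 1)
      + ((b.eval ((k : ℤ) + 2) : ℤ) : ℝ) * q k := by exact_mod_cast r
    rw [mul_comm (A * ((k : ℝ) + 2) ^ d), ← div_div _ _ (A * ((k : ℝ) + 2) ^ d), ← add_div]
    gcongr
    rw [div_le_iff₀ h1, r', add_mul]
    refine add_le_add le_rfl ?_
    rw [div_mul_eq_mul_div, le_div_iff₀ p3', mul_assoc]
    gcongr
    linarith
  have hlim : Tendsto (fun n => u (n + 1) / u n) atTop (nhds 1) := by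
    have h2 := hT1.add hT2
    rw [add_zero] at h2
    refine tendsto_of_tendsto_of_tendsto_of_le_of_le' hT1 h2 (Eventually.of_forall hlow) ?_
    filter_upwards [eventually_ge_atTop 1] with n hn using hup n hn
  have hlog : Tendsto (fun n => Real.log (u (n + 1)) - Real.log (u n)) atTop (nhds 0) := by
    have h := (Real.continuousAt_log (one_ne_zero)).tendsto.comp hlim
    rw [Real.log_one] at h
    refine h.congr ?_
    intro n
    exact Real.log_div (hupos _).ne' (hupos _).ne'
  refine hlog.cesaro.congr ?_
  intro n
  rw [Finset.sum_range_sub (fun n => Real.log (u n))]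
  have h0 : u 0 = 1 := by simp [u, hq0]
  rw [h0, Real.log_one, sub_zero, one_div]
end

section
/- Let a, b ∈ ℤ[X] with deg b = d_b > 2·deg a, positive leading coefficient B of b, and a(n) > 0, b(n) > 0 for all integers n ≥ 1. Let q be the denominator sequence of PCF[a,b] (q_{−1}=0, q_0=1, q_n = a(n)q_{n−1} + b(n)q_{n−2}). Then lim_{n→∞} (1/n)·ln( q_n / (B^{n/2} · (n!)^{d_b/2}) ) = 0; i.e., q_n ≐ B^{n/2} · (n!)^{d_b/2}. -/
open Filter Polynomial

lemma aux_growth (u α β : ℕ → ℝ) (hu : ∀ n, 0 < u n) (hα0 : ∀ n, 0 ≤ α n)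
    (hα : Tendsto α atTop (nhds 0)) (hβ : Tendsto β atTop (nhds 1))
    (hrec : ∀ n, u (n + 2) = α n * u (n + 1) + β n * u n) :
    Tendsto (fun n : ℕ => (1 : ℝ) / n * Real.log (u n)) atTop (nhds 0) := by
  have key : ∀ δ : ℝ, 0 < δ → ∃ K : ℝ, ∃ N : ℕ, ∀ n, N ≤ n →
      |Real.log (u n)| ≤ K + n * δ := by
    intro δ hδ
    have h1 : Tendsto (fun n => α n * Real.exp δ + β n) atTop (nhds (0 * Real.exp δ + 1)) :=
      (hα.mul_const _).add hβ
    have e1 : (0 * Real.exp δ + 1) < Real.exp δ * Real.exp δ := by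
      have := Real.one_lt_exp_iff.mpr hδ
      nlinarith
    have e2 : Real.exp (-δ) * Real.exp (-δ) < 1 := by
      rw [← Real.exp_add, Real.exp_lt_one_iff]
      linarith
    obtain ⟨N, hN⟩ := eventually_atTop.mp
      ((h1.eventually_lt_const e1).and (hβ.eventually_const_lt e2))
    let K := |Real.log (u N)| + |Real.log (u (N + 1))|
    have up : ∀ m, u (N + m) ≤ Real.exp (K + m * δ) ∧
        u (N + m + 1) ≤ Real.exp (K + (m + 1 : ℕ) * δ) := by
      intro m
      induction m with
      | zero =>
        constructor
        · rw [← Real.log_le_iff_le_exp (hu _)]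
          have := le_abs_self (Real.log (u N))
          have := abs_nonneg (Real.log (u (N + 1)))
          simp only [K, Nat.add_zero, Nat.cast_zero]; linarith
        · rw [← Real.log_le_iff_le_exp (hu _)]
          have := le_abs_self (Real.log (u (N + 1)))
          have := abs_nonneg (Real.log (u N))
          simp only [K, Nat.add_zero, Nat.cast_zero, zero_add, Nat.cast_one]; linarith
      | succ m ih =>
        refine ⟨ih.2, ?_⟩
        have h := hN (N + m) (by omega)
        have hβp : 0 ≤ β (N + m) := by
          have := h.2
          have := Real.exp_pos (-δ)
          nlinarith
        have r := hrec (N + m)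
        have x1 : Real.exp (K + (m + 1 : ℕ) * δ) = Real.exp (K + m * δ) * Real.exp δ := by
          rw [← Real.exp_add]; push_cast; ring_nf
        have x2 : Real.exp (K + (m + 1 + 1 : ℕ) * δ)
            = Real.exp (K + m * δ) * (Real.exp δ * Real.exp δ) := by
          rw [← Real.exp_add, ← Real.exp_add]; push_cast; ring_nf
        show u (N + m + 2) ≤ _
        rw [r, x2]
        rw [x1] at ih
        have y1 := mul_le_mul_of_nonneg_left ih.2 (hα0 (N + m))
        have y2 := mul_le_mul_of_nonneg_left ih.1 hβp
        have y3 := mul_le_mul_of_nonneg_left h.1.le (Real.exp_pos (K + m * δ)).le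
        nlinarith
    have lo : ∀ m : ℕ, Real.exp (-(K + m * δ)) ≤ u (N + m) ∧
        Real.exp (-(K + (m + 1 : ℕ) * δ)) ≤ u (N + m + 1) := by
      intro m
      induction m with
      | zero =>
        constructor
        · rw [← Real.le_log_iff_exp_le (hu _)]
          have := neg_abs_le (Real.log (u N))
          have := abs_nonneg (Real.log (u (N + 1)))
          simp only [K, Nat.add_zero, Nat.cast_zero]; linarith
        · rw [← Real.le_log_iff_exp_le (hu _)]
          have := neg_abs_le (Real.log (u (N + 1)))
          have := abs_nonneg (Real.log (u N))
          simp only [K, Nat.add_zero, Nat.cast_zero, zero_add, Nat.cast_one]; linarith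
      | succ m ih =>
        refine ⟨ih.2, ?_⟩
        have h := hN (N + m) (by omega)
        have r := hrec (N + m)
        have x2 : Real.exp (-(K + (m + 1 + 1 : ℕ) * δ))
            = (Real.exp (-δ) * Real.exp (-δ)) * Real.exp (-(K + m * δ)) := by
          rw [← Real.exp_add, ← Real.exp_add]; push_cast; ring_nf
        show _ ≤ u (N + m + 2)
        rw [r, x2]
        have y1 := mul_nonneg (hα0 (N + m)) (hu (N + m + 1)).le
        have y2 : (Real.exp (-δ) * Real.exp (-δ)) * Real.exp (-(K + m * δ)) ≤
            β (N + m) * u (N + m) :=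
          mul_le_mul h.2.le ih.1 (Real.exp_pos _).le (le_trans (by positivity) h.2.le)
        linarith
    refine ⟨K, N, fun n hn => ?_⟩
    obtain ⟨m, rfl⟩ := Nat.exists_eq_add_of_le hn
    have h1 := (Real.log_le_iff_le_exp (hu _)).mpr (up m).1
    have h2 := (Real.le_log_iff_exp_le (hu _)).mpr (lo m).1
    have h3 : 0 ≤ (N : ℝ) * δ := by positivity
    rw [abs_le]
    push_cast
    constructor <;> nlinarith
  rw [Metric.tendsto_atTop']
  intro ε hε
  obtain ⟨K, N, hK⟩ := key (ε / 2) (by linarith)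
  obtain ⟨M, hM⟩ := exists_nat_gt (2 * K / ε)
  refine ⟨N + M, fun n hn => ?_⟩
  have hn0 : (0 : ℝ) < n := by exact_mod_cast (by omega : 0 < n)
  have h := hK n (by omega)
  have hMn : (M : ℝ) < n := by exact_mod_cast (by omega : M < n)
  have h2 : 2 * K < n * ε := by
    rw [div_lt_iff₀ hε] at hM
    nlinarith
  rw [Real.dist_eq, sub_zero, abs_mul, abs_of_pos (by positivity), one_div,
    inv_mul_lt_iff₀ hn0]
  linarith

/-- Appendix B, first case: `deg b > 2·deg a`.
For such a PCF with positive leading coefficient `B` of `b` and positive values on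
positive integers, the denominators satisfy
`lim (1/n)·ln( qₙ / (B^{n/2}·(n!)^{d_b/2}) ) = 0`, i.e. `qₙ ≐ B^{n/2}·(n!)^{d_b/2}`
(real powers). -/
theorem stmt_16 (a b : Polynomial ℤ)
    (hdeg : 2 * a.natDegree < b.natDegree)
    (hB : 0 < b.leadingCoeff)
    (hapos : ∀ n : ℕ, 1 ≤ n → 0 < a.eval (n : ℤ))
    (hbpos : ∀ n : ℕ, 1 ≤ n → 0 < b.eval (n : ℤ))
    (q : ℕ → ℤ)
    (hq0 : q 0 = 1)
    (hq1 : q 1 = a.eval 1 * q 0 + b.eval 1 * 0)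
    (hqrec : ∀ n : ℕ, q (n + 2) = a.eval ((n : ℤ) + 2) * q (n + 1) + b.eval ((n : ℤ) + 2) * q n) :
    Tendsto (fun n : ℕ =>
        (1 : ℝ) / n * Real.log ((q n : ℝ) /
          ((b.leadingCoeff : ℝ) ^ ((n : ℝ) / 2) *
            (Nat.factorial n : ℝ) ^ ((b.natDegree : ℝ) / 2))))
      atTop (nhds 0) := by
  have hBr : (0 : ℝ) < (b.leadingCoeff : ℝ) := by exact_mod_cast hB
  set B : ℝ := (b.leadingCoeff : ℝ) with hBdef
  set d := b.natDegree with hd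
  have hqpos : ∀ n, 0 < q n ∧ 0 < q (n + 1) := by
    intro n
    induction n with
    | zero =>
      refine ⟨by simp [hq0], ?_⟩
      have := hapos 1 le_rfl
      simpa [hq1, hq0] using this
    | succ n ih =>
      refine ⟨ih.2, ?_⟩
      have h1 := hapos (n + 2) (by omega)
      have h2 := hbpos (n + 2) (by omega)
      push_cast at h1 h2
      show 0 < q (n + 2)
      rw [hqrec]
      have := mul_pos h1 ih.2
      have := mul_pos h2 ih.1
      linarith
  let s : ℕ → ℝ := fun n => √(B * (n : ℝ) ^ d)
  let D : ℕ → ℝ := fun n => √(B ^ n * (n.factorial : ℝ) ^ d)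
  have hD : ∀ n : ℕ, B ^ ((n : ℝ) / 2) * (n.factorial : ℝ) ^ ((d : ℝ) / 2) = D n := by
    intro n
    have hf : (0 : ℝ) ≤ n.factorial := by positivity
    simp only [D]
    rw [Real.sqrt_mul (by positivity), Real.sqrt_eq_rpow, Real.sqrt_eq_rpow,
      ← Real.rpow_natCast, ← Real.rpow_natCast, ← Real.rpow_mul hBr.le, ← Real.rpow_mul hf]
    ring_nf
  have hDs : ∀ n, D (n + 1) = s (n + 1) * D n := by
    intro n
    simp only [D, s]
    rw [← Real.sqrt_mul (by positivity), Nat.factorial_succ]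
    push_cast
    congr 1
    rw [mul_pow]
    ring
  have hDpos : ∀ n, 0 < D n := by
    intro n
    have : (0 : ℝ) < n.factorial := by exact_mod_cast n.factorial_pos
    simp only [D]; positivity
  have hspos : ∀ n, 0 < s (n + 1) := by
    intro n
    simp only [s]
    apply Real.sqrt_pos.mpr
    push_cast
    positivity
  have hss : ∀ n : ℕ, s n ^ 2 = B * (n : ℝ) ^ d := fun n => Real.sq_sqrt (by positivity)
  let A : ℝ[X] := a.map (Int.castRingHom ℝ)
  let P : ℝ[X] := b.map (Int.castRingHom ℝ)
  let L : ℝ[X] := C B * X ^ d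
  have hinj : Function.Injective (Int.castRingHom ℝ) := Int.cast_injective
  have hPd : P.natDegree = d := natDegree_map_eq_of_injective hinj b
  have hPl : P.leadingCoeff = B := by
    simp only [P]
    rw [leadingCoeff_map_of_injective hinj]; rfl
  have hAd : A.natDegree = a.natDegree := natDegree_map_eq_of_injective hinj a
  have hP0 : P ≠ 0 := by
    intro h
    rw [h] at hPl
    simp at hPl
    exact hBr.ne hPl
  have hLd : L.natDegree = d := natDegree_C_mul_X_pow d B hBr.ne'
  have hLl : L.leadingCoeff = B := leadingCoeff_C_mul_X_pow B d
  have hL0 : L ≠ 0 := by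
    intro h
    rw [h] at hLl
    simp at hLl
    exact hBr.ne hLl
  have hLe : ∀ x : ℝ, L.eval x = B * x ^ d := by intro x; simp [L]
  have hcast : ∀ (p : ℤ[X]) (n : ℕ), ((p.eval ((n : ℤ) + 2) : ℤ) : ℝ)
      = (p.map (Int.castRingHom ℝ)).eval (((n + 2 : ℕ)) : ℝ) := by
    intro p n
    have := Polynomial.eval_intCast_map (Int.castRingHom ℝ) p ((n : ℤ) + 2)
    push_cast at this ⊢
    rw [this]; simp
  have hsh : Tendsto (fun n : ℕ => ((n + 2 : ℕ) : ℝ)) atTop atTop :=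
    tendsto_natCast_atTop_atTop.comp (tendsto_add_atTop_nat 2)
  let α : ℕ → ℝ := fun n => ((a.eval ((n : ℤ) + 2) : ℤ) : ℝ) / s (n + 2)
  let β : ℕ → ℝ := fun n => ((b.eval ((n : ℤ) + 2) : ℤ) : ℝ) / (s (n + 2) * s (n + 1))
  have hα0 : ∀ n, 0 ≤ α n := by
    intro n
    have h1 := hapos (n + 2) (by omega)
    push_cast at h1
    have h2 : (0 : ℝ) < ((a.eval ((n : ℤ) + 2) : ℤ) : ℝ) := by exact_mod_cast h1
    exact div_nonneg h2.le (hspos (n + 1)).le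
  have hβ0 : ∀ n, 0 ≤ β n := by
    intro n
    have h1 := hbpos (n + 2) (by omega)
    push_cast at h1
    have h2 : (0 : ℝ) < ((b.eval ((n : ℤ) + 2) : ℤ) : ℝ) := by exact_mod_cast h1
    exact div_nonneg h2.le (mul_pos (hspos (n + 1)) (hspos n)).le
  have hα : Tendsto α atTop (nhds 0) := by
    have hlt : (A ^ 2).degree < L.degree := by
      apply degree_lt_degree
      rw [hLd, natDegree_pow, hAd]
      exact hdeg
    have h := (div_tendsto_atTop_zero_of_degree_lt (A ^ 2) L hlt).comp hsh
    have h' := h.sqrt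
    rw [Real.sqrt_zero] at h'
    refine h'.congr fun n => ?_
    rw [← Real.sqrt_sq (hα0 n)]
    simp only [α, Function.comp, hcast, div_pow, hss, hLe, eval_pow]
    rfl
  have hβ : Tendsto β atTop (nhds 1) := by
    have hdq : P.degree = L.degree := by
      rw [degree_eq_natDegree hP0, degree_eq_natDegree hL0, hPd, hLd]
    have h := (div_tendsto_atTop_leadingCoeff_div_of_degree_eq P L hdq).comp hsh
    rw [hPl, hLl, div_self hBr.ne'] at h
    have hr : Tendsto (fun n : ℕ => 1 + 1 / ((n : ℝ) + 1)) atTop (nhds (1 + 0)) :=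
      tendsto_const_nhds.add tendsto_one_div_add_atTop_nhds_zero_nat
    have h' := ((h.pow 2).mul (hr.pow d)).sqrt
    simp only [add_zero, one_pow, mul_one, Real.sqrt_one] at h'
    refine h'.congr fun n => ?_
    rw [← Real.sqrt_sq (hβ0 n)]
    simp only [β, Function.comp, hcast, div_pow, mul_pow, hss, hLe]
    congr 1
    have e : (1 + 1 / ((n : ℝ) + 1)) = ((n + 2 : ℕ) : ℝ) / ((n + 1 : ℕ) : ℝ) := by
      push_cast
      field_simp
      ring
    rw [e, div_pow]
    have p1 : (0 : ℝ) < ((n + 1 : ℕ) : ℝ) := by positivity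
    have p2 : (0 : ℝ) < ((n + 2 : ℕ) : ℝ) := by positivity
    generalize ((n + 1 : ℕ) : ℝ) = y at *
    generalize ((n + 2 : ℕ) : ℝ) = x at *
    field_simp
    rfl
  have main := aux_growth (fun n => (q n : ℝ) / D n) α β
    (fun n => div_pos (by exact_mod_cast (hqpos n).1) (hDpos n)) hα0 hα hβ (by
      intro n
      have h0 := (hDpos n).ne'
      have h1 := (hspos n).ne'
      have h2 : s (n + 2) ≠ 0 := (hspos (n + 1)).ne'
      have e2 : D (n + 2) = s (n + 2) * (s (n + 1) * D n) := by
        rw [← hDs n]; exact hDs (n + 1)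
      simp only [α, β]
      rw [e2, hDs n, hqrec]
      push_cast
      field_simp)
  refine main.congr fun n => ?_
  rw [hD]
end
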